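/- In X_6' (k = 6), for the class d = 4[L] − Σ_{i=1}^6 [E_i] (so a = 4, bᵢ = 1 for all i, and d·[E] = 2), the refined count of d-marked floor diagrams of genus 0 and type ((1),(1)) is N_q^{(1),(1)}(X_6',4[L]−Σ[E_i],0) = [2]_q⁴ + [4]_q² + 10[3]_q² + 64[2]_q² + 196. -/

import Mathlib

open LaurentPolynomial

open scoped Classical

noncomputable section FloorDiagrams

/-- The quantum integer `[n]_q = q^{−(n−1)/2} + q^{−(n−3)/2} + ⋯ + q^{(n−1)/2}`,
as a Laurent polynomial in the variable `t = q^{1/2}` (here `T m` denotes `t^m`). -/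
def qInt (n : ℕ) : LaurentPolynomial ℚ :=
  ∑ j ∈ Finset.range n, T (2 * (j : ℤ) - ((n : ℤ) - 1))

/-- A finite weighted oriented (multi)graph: `nV` vertices, `nE` edges, each edge `e`
having a source `src e`, a target `tgt e` and a positive integer weight `w e`. -/
structure WOGraph where
  nV : ℕ
  nE : ℕ
  src : Fin nE → Fin nV
  tgt : Fin nE → Fin nV
  w : Fin nE → ℕ
  w_pos : ∀ e, 0 < w e

namespace WOGraph

variable (G : WOGraph)

/-- The edge `e` is adjacent to the vertex `v`. -/
def Adj (e : Fin G.nE) (v : Fin G.nV) : Prop :=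
  G.src e = v ∨ G.tgt e = v

/-- One step of the (unoriented) adjacency relation between vertices. -/
def connStep (u v : Fin G.nV) : Prop :=
  ∃ e, (G.src e = u ∧ G.tgt e = v) ∨ (G.src e = v ∧ G.tgt e = u)

/-- The graph is connected. -/
def Connected : Prop :=
  0 < G.nV ∧ ∀ u v, Relation.ReflTransGen G.connStep u v

/-- One step of the oriented relation between vertices. -/
def dirStep (u v : Fin G.nV) : Prop :=
  ∃ e, G.src e = u ∧ G.tgt e = v

/-- The oriented graph is acyclic: there is no non-trivial oriented cycle. -/
def Acyclic : Prop :=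
  ∀ v, ¬ Relation.TransGen G.dirStep v v

/-- The number of edges adjacent to a vertex (with multiplicity). -/
def degree (v : Fin G.nV) : ℕ :=
  (Finset.univ.filter fun e => G.src e = v).card +
    (Finset.univ.filter fun e => G.tgt e = v).card

/-- A leaf is a vertex adjacent to exactly one edge. -/
def IsLeaf (v : Fin G.nV) : Prop := G.degree v = 1

/-- `Vert^∞(G)`: leaves all of whose adjacent edges are outgoing. -/
def InfVert (v : Fin G.nV) : Prop :=
  G.IsLeaf v ∧ ∀ e, G.Adj e v → G.src e = v

/-- `Edge^∞(G)`: edges adjacent to a vertex of `Vert^∞(G)`. -/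
def InfEdge (e : Fin G.nE) : Prop :=
  ∃ v, G.Adj e v ∧ G.InfVert v

/-- The divergence of a vertex: sum of weights of incoming edges minus sum of weights of
outgoing edges. -/
def div (v : Fin G.nV) : ℤ :=
  (∑ e ∈ Finset.univ.filter (fun e => G.tgt e = v), (G.w e : ℤ)) -
    (∑ e ∈ Finset.univ.filter (fun e => G.src e = v), (G.w e : ℤ))

/-- A sink is a vertex all of whose adjacent edges are oriented toward it. -/
def IsSink (v : Fin G.nV) : Prop :=
  ∀ e, G.Adj e v → G.tgt e = v

/-- One step of the partial order on `Vert ⊔ Edge` induced by the orientation: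
a vertex is below each of its outgoing edges, and each edge is below its target. -/
def veStep : (Fin G.nV ⊕ Fin G.nE) → (Fin G.nV ⊕ Fin G.nE) → Prop
  | Sum.inl u, Sum.inr e => G.src e = u
  | Sum.inr e, Sum.inl v => G.tgt e = v
  | _, _ => False

end WOGraph

/-- `G` is a floor diagram (relative to a conic) of genus `g` and degree `a`. -/
structure IsFloorDiagram (G : WOGraph) (g a : ℕ) : Prop where
  conn : G.Connected
  acyclic : G.Acyclic
  betti : G.nE + 1 = G.nV + g
  div_floor : ∀ v, ¬ G.InfVert v → G.div v = 2 ∨ G.div v = 4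
  div_inf : ∀ v, G.InfVert v → G.div v ≤ -1
  sink_of_two : ∀ v, ¬ G.InfVert v → G.div v = 2 → G.IsSink v
  total_div : (∑ v ∈ Finset.univ.filter (fun v => G.InfVert v), G.div v) = -(2 * (a : ℤ))

/-- The marking domain `A₀ ⊔ A₁ ⊔ ⋯ ⊔ A_k`, where
`A₀ = {1, …, a − 1 + g + l(μ₁) + l(μ₂)}` and `|Aᵢ| = bᵢ`. -/
def MarkDom (k g a : ℕ) (b : Fin k → ℕ) (l1 l2 : ℕ) : Type :=
  Fin (a + g + l1 + l2 - 1) ⊕ (Σ i : Fin k, Fin (b i))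

/-- `m` is a `d`-marking of type `(μ₁, μ₂)` of the floor diagram `G` of genus `g` and
degree `a`, where `d` is encoded by `a = d·[L]` and `bᵢ = d·[Eᵢ]`. -/
structure IsMarking (k g a : ℕ) (b : Fin k → ℕ) (μ₁ μ₂ : List ℕ) (G : WOGraph)
    (m : MarkDom k g a b μ₁.length μ₂.length → Fin G.nV ⊕ Fin G.nE) : Prop where
  inj : Function.Injective m
  /-- `m` is increasing: on `A₀` (with its natural order) it is compatible with the strict
  partial order on `Vert ⊔ Edge` induced by the orientation; the elements of
  `A₁, …, A_k` are incomparable, hence impose no condition. -/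
  incr : ∀ i j : Fin (a + g + μ₁.length + μ₂.length - 1),
    Relation.TransGen G.veStep (m (Sum.inl i)) (m (Sum.inl j)) → i < j
  /-- No floor of degree `1` is in the image of `m`. -/
  no_floor_one : ∀ v, ¬ G.InfVert v → G.div v = 2 → ∀ p, m p ≠ Sum.inl v
  /-- For `v ∈ Vert^∞` with adjacent edge `e`, exactly one of `v`, `e` is in the image. -/
  inf_pair : ∀ v, G.InfVert v → ∀ e, G.Adj e v →
    Xor' (∃ p, m p = Sum.inl v) (∃ p, m p = Sum.inr e)
  /-- `m(A₁ ∪ ⋯ ∪ A_k) ⊆ Vert^∞`. -/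
  exc_vert : ∀ (i : Fin k) (p : Fin (b i)),
    ∃ v, G.InfVert v ∧ m (Sum.inr ⟨i, p⟩) = Sum.inl v
  /-- `m({1, …, l(μ₁)}) = m(A₀) ∩ Vert^∞`. -/
  mu1_vert : ∀ i : Fin (a + g + μ₁.length + μ₂.length - 1),
    (∃ v, G.InfVert v ∧ m (Sum.inl i) = Sum.inl v) ↔ (i : ℕ) < μ₁.length
  /-- Every floor is adjacent to at most one edge adjacent to a vertex of `m(Aᵢ)`. -/
  floor_once : ∀ (i : Fin k) (v : Fin G.nV), ¬ G.InfVert v →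
    ∀ e e' : Fin G.nE, G.Adj e v → G.Adj e' v →
      (∃ (p : Fin (b i)) (u : Fin G.nV), m (Sum.inr ⟨i, p⟩) = Sum.inl u ∧ G.Adj e u) →
      (∃ (p : Fin (b i)) (u : Fin G.nV), m (Sum.inr ⟨i, p⟩) = Sum.inl u ∧ G.Adj e' u) →
      e = e'
  /-- For `i ∈ {1, …, l(μ₁)}`, the edge adjacent to `m(i)` has weight `μ₁^{(i)}`. -/
  mu1_weight : ∀ (i : Fin (a + g + μ₁.length + μ₂.length - 1)) (h : (i : ℕ) < μ₁.length)
    (v : Fin G.nV) (e : Fin G.nE),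
      m (Sum.inl i) = Sum.inl v → G.Adj e v → G.w e = μ₁.get ⟨(i : ℕ), h⟩
  /-- Exactly `l(μ₂)` edges of `Edge^∞` are in the image of `m|_{A₀}`, and their weights
  are the entries of `μ₂`. -/
  mu2_edges :
    ((Finset.univ.filter fun e : Fin G.nE =>
        G.InfEdge e ∧ ∃ i : Fin (a + g + μ₁.length + μ₂.length - 1),
          m (Sum.inl i) = Sum.inr e).val.map G.w) = (μ₂ : Multiset ℕ)

/-- A `d`-marked floor diagram of genus `g` and type `(μ₁, μ₂)`, where the class `d` is
encoded by `a = d·[L]` and `bᵢ = d·[Eᵢ]`. -/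
structure MarkedFD (k g a : ℕ) (b : Fin k → ℕ) (μ₁ μ₂ : List ℕ) where
  G : WOGraph
  m : MarkDom k g a b μ₁.length μ₂.length → Fin G.nV ⊕ Fin G.nE
  fd : IsFloorDiagram G g a
  marking : IsMarking k g a b μ₁ μ₂ G m

namespace MarkedFD

variable {k g a : ℕ} {b : Fin k → ℕ} {μ₁ μ₂ : List ℕ}

/-- Equivalence of marked floor diagrams: an isomorphism of weighted oriented graphs
together with a bijection of the marking sets which is the identity on `A₀` and maps
each `Aᵢ` (`i ≥ 1`) bijectively onto itself, compatible with the markings. -/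
def Equivalent (X Y : MarkedFD k g a b μ₁ μ₂) : Prop :=
  ∃ (φV : Fin X.G.nV ≃ Fin Y.G.nV) (φE : Fin X.G.nE ≃ Fin Y.G.nE)
    (ψ : MarkDom k g a b μ₁.length μ₂.length ≃ MarkDom k g a b μ₁.length μ₂.length),
      (∀ e, Y.G.src (φE e) = φV (X.G.src e)) ∧
      (∀ e, Y.G.tgt (φE e) = φV (X.G.tgt e)) ∧
      (∀ e, Y.G.w (φE e) = X.G.w e) ∧
      (∀ i, ψ (Sum.inl i) = Sum.inl i) ∧
      (∀ (i : Fin k) (p : Fin (b i)), ∃ p' : Fin (b i),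
        ψ (Sum.inr ⟨i, p⟩) = Sum.inr ⟨i, p'⟩) ∧
      (∀ p, Y.m (ψ p) = Sum.map φV φE (X.m p))

variable (X : MarkedFD k g a b μ₁ μ₂)

/-- `Edge^{μ₁}`: edges adjacent to `m({1, …, l(μ₁)})`. -/
def EdgeMu1 : Finset (Fin X.G.nE) :=
  Finset.univ.filter fun e =>
    ∃ i : Fin (a + g + μ₁.length + μ₂.length - 1), (i : ℕ) < μ₁.length ∧
      ∃ v, X.m (Sum.inl i) = Sum.inl v ∧ X.G.Adj e v

/-- `Edge^{μ₂}`: the `l(μ₂)` edges of `Edge^∞` in the image of `m|_{A₀}`. -/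
def EdgeMu2 : Finset (Fin X.G.nE) :=
  Finset.univ.filter fun e =>
    X.G.InfEdge e ∧ ∃ i : Fin (a + g + μ₁.length + μ₂.length - 1),
      X.m (Sum.inl i) = Sum.inr e

/-- `Edge°`: edges not in `Edge^∞`. -/
def EdgeO : Finset (Fin X.G.nE) :=
  Finset.univ.filter fun e => ¬ X.G.InfEdge e

/-- The q-refined (Block–Göttsche) multiplicity of a marked floor diagram:
`∏_{e∈Edge^{μ₂}} [w(e)]_q/w(e) · ∏_{e∈Edge^{μ₁}} [w(e)]_q/w(e) · ∏_{e∈Edge^{μ₂}} w(e)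
 · ∏_{e∈Edge°} [w(e)]_q²`. -/
def multq : LaurentPolynomial ℚ :=
  (∏ e ∈ X.EdgeMu2, (C ((X.G.w e : ℚ)⁻¹) * qInt (X.G.w e))) *
    (∏ e ∈ X.EdgeMu1, (C ((X.G.w e : ℚ)⁻¹) * qInt (X.G.w e))) *
    (∏ e ∈ X.EdgeMu2, C ((X.G.w e : ℚ))) *
    (∏ e ∈ X.EdgeO, (qInt (X.G.w e)) ^ 2)

/-- The complex multiplicity of a marked floor diagram:
`∏_i μ₂^{(i)} · ∏_{e∈Edge°} w(e)²`. -/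
def multC : ℚ :=
  (μ₂.map fun x => (x : ℚ)).prod * ∏ e ∈ X.EdgeO, (X.G.w e : ℚ) ^ 2

end MarkedFD

/-- `N` is the refined count `N_q^{μ₁,μ₂}(X_k', d, g)` of `d`-marked floor diagrams of
genus `g` and type `(μ₁, μ₂)`: the sum of the q-refined multiplicities over a (finite) set
of representatives of the equivalence classes of marked floor diagrams. -/
def IsRefinedCount (k g a : ℕ) (b : Fin k → ℕ) (μ₁ μ₂ : List ℕ)
    (N : LaurentPolynomial ℚ) : Prop :=
  ∃ (ι : Type) (hι : Fintype ι) (rep : ι → MarkedFD k g a b μ₁ μ₂),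
    (∀ X : MarkedFD k g a b μ₁ μ₂, ∃! i : ι, X.Equivalent (rep i)) ∧
    N = ∑ i ∈ @Finset.univ ι hι, (rep i).multq

/-- `N` is the complex count `N_ℂ^{μ₁,μ₂}(X_k', d, g)` of `d`-marked floor diagrams of
genus `g` and type `(μ₁, μ₂)`. -/
def IsComplexCount (k g a : ℕ) (b : Fin k → ℕ) (μ₁ μ₂ : List ℕ) (N : ℚ) : Prop :=
  ∃ (ι : Type) (hι : Fintype ι) (rep : ι → MarkedFD k g a b μ₁ μ₂),
    (∀ X : MarkedFD k g a b μ₁ μ₂, ∃! i : ι, X.Equivalent (rep i)) ∧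
    N = ∑ i ∈ @Finset.univ ι hι, (rep i).multC

end FloorDiagrams

/-!
In genus `0` and degree `4` the inner edges and floors form a tree, and every inner edge leaves a
floor of degree `2`. Counting degrees, this tree is either an edge between two floors of degree `2`
or a path whose middle floor has degree `2` and whose two outer floors have degree `1`: a star with
one or two outer floors of a common divergence `d`. The eight elements of `Edge^∞` have weight `1`;
six of their leaves are marked by the exceptional classes, one by the mark `0`, and the remaining
one has its edge marked. All floors of degree `2` and all inner edges are marked, so a marked
diagram amounts to the map attaching the eight ends to the floors, together with the position of
the marked end among the marks. An outer floor carrying `m` ends meets an inner edge of weight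
`d - m`, and the sum over all attaching maps is computed by removing one end at a time.
-/

namespace WOGraph

variable {G : WOGraph}

lemma infVert_iff {v : Fin G.nV} :
    G.InfVert v ↔ (∃! e, G.src e = v) ∧ ∀ e, G.tgt e ≠ v := by
  have hunique : (Finset.univ.filter fun e => G.src e = v).card = 1 ↔ ∃! e, G.src e = v := by
    simp [Finset.card_eq_one, Finset.singleton_iff_unique_mem]
  have hnone : (Finset.univ.filter fun e => G.tgt e = v).card = 0 ↔ ∀ e, G.tgt e ≠ v := by
    simp [Finset.filter_eq_empty_iff]
  rw [← hunique, ← hnone]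
  constructor
  · rintro ⟨hleaf, hout⟩
    have hsub : (Finset.univ.filter fun e => G.tgt e = v).card ≤
        (Finset.univ.filter fun e => G.src e = v).card :=
      Finset.card_le_card (Finset.monotone_filter_right _ fun e _ he => hout e (Or.inr he))
    have hdeg : (Finset.univ.filter fun e => G.src e = v).card +
      (Finset.univ.filter fun e => G.tgt e = v).card = 1 := hleaf
    omega
  · rintro ⟨hsrc, htgt⟩
    exact ⟨by rw [IsLeaf, degree, hsrc, htgt], fun e he => he.resolve_right (hnone.1 htgt e)⟩

lemma not_infVert_tgt (e : Fin G.nE) : ¬ G.InfVert (G.tgt e) :=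
  fun h => (infVert_iff.1 h).2 e rfl

lemma InfVert.eq_of_src_eq {e e' : Fin G.nE} (h : G.InfVert (G.src e))
    (he : G.src e' = G.src e) : e' = e :=
  (infVert_iff.1 h).1.unique he rfl

lemma infEdge_iff {e : Fin G.nE} : G.InfEdge e ↔ G.InfVert (G.src e) :=
  ⟨fun ⟨v, hv, hi⟩ => by rwa [hi.2 e hv], fun h => ⟨_, Or.inl rfl, h⟩⟩

lemma div_src_of_infEdge {e : Fin G.nE} (h : G.InfEdge e) : G.div (G.src e) = -(G.w e : ℤ) := by
  rw [infEdge_iff] at h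
  have hsrc : (Finset.univ.filter fun e' => G.src e' = G.src e) = {e} := by
    ext e'
    simpa using ⟨h.eq_of_src_eq, fun he => he ▸ rfl⟩
  simp [div, hsrc, (infVert_iff.1 h).2]

lemma sum_div : ∑ v, G.div v = 0 := by
  simp only [div, Finset.sum_sub_distrib, Finset.sum_fiberwise, sub_self]

lemma card_infEdge :
    (Finset.univ.filter G.InfEdge).card = (Finset.univ.filter G.InfVert).card := by
  refine Finset.card_bij (fun e _ => G.src e) ?_ ?_ ?_
  · simp [infEdge_iff]
  · intro e _ e' he' h
    exact (infEdge_iff.1 (Finset.mem_filter.1 he').2).eq_of_src_eq h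
  · intro v hv
    have hinf := (Finset.mem_filter.1 hv).2
    obtain ⟨e, rfl⟩ := (infVert_iff.1 hinf).1.exists
    exact ⟨e, by simpa [infEdge_iff] using hinf, rfl⟩

lemma transGen_veStep_of_transGen_dirStep {u v : Fin G.nV}
    (h : Relation.TransGen G.dirStep u v) :
    Relation.TransGen G.veStep (Sum.inl u) (Sum.inl v) := by
  have hedge (e : Fin G.nE) :
      Relation.TransGen G.veStep (Sum.inl (G.src e)) (Sum.inl (G.tgt e)) :=
    .tail (b := Sum.inr e) (.single rfl) rfl
  induction h with
  | single h =>
    obtain ⟨e, rfl, rfl⟩ := h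
    exact hedge e
  | tail _ h ih =>
    obtain ⟨e, rfl, rfl⟩ := h
    exact ih.trans (hedge e)

lemma lt_of_transGen_veStep {rk : Fin G.nV ⊕ Fin G.nE → ℕ}
    (hrk : ∀ x y, G.veStep x y → rk x < rk y) {x y : Fin G.nV ⊕ Fin G.nE}
    (h : Relation.TransGen G.veStep x y) : rk x < rk y := by
  induction h with
  | single h => exact hrk _ _ h
  | tail _ h ih => exact ih.trans (hrk _ _ h)

lemma acyclic_of_rank {rk : Fin G.nV ⊕ Fin G.nE → ℕ}
    (hrk : ∀ x y, G.veStep x y → rk x < rk y) : G.Acyclic := fun _ h =>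
  lt_irrefl _ (lt_of_transGen_veStep hrk (transGen_veStep_of_transGen_dirStep h))

/-- The floors of a floor diagram: the vertices outside `Vert^∞`. -/
noncomputable def floors (G : WOGraph) : Finset (Fin G.nV) :=
  Finset.univ.filter fun v => ¬ G.InfVert v

/-- The floors of degree `2`, that is, of divergence `4`. -/
noncomputable def doubleFloors (G : WOGraph) : Finset (Fin G.nV) :=
  G.floors.filter fun v => G.div v = 4

/-- The edges `Edge°` outside `Edge^∞`. -/
noncomputable def innerEdges (G : WOGraph) : Finset (Fin G.nE) :=
  Finset.univ.filter fun e => ¬ G.InfEdge e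

@[simp] lemma mem_floors {v : Fin G.nV} : v ∈ G.floors ↔ ¬ G.InfVert v := by
  simp [floors]

@[simp] lemma mem_doubleFloors {v : Fin G.nV} :
    v ∈ G.doubleFloors ↔ ¬ G.InfVert v ∧ G.div v = 4 := by
  simp [doubleFloors]

@[simp] lemma mem_innerEdges {e : Fin G.nE} : e ∈ G.innerEdges ↔ ¬ G.InfEdge e := by
  simp [innerEdges]

/-- A presentation of `G` on arbitrary vertex and edge types `V` and `E`, through which the
numberings of vertices and edges by `Fin` are avoided. -/
structure Presentation (G : WOGraph) {V E : Type*} (src tgt : E → V) (w : E → ℕ) where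
  vert : V ≃ Fin G.nV
  edge : E ≃ Fin G.nE
  src_edge : ∀ e, G.src (edge e) = vert (src e)
  tgt_edge : ∀ e, G.tgt (edge e) = vert (tgt e)
  w_edge : ∀ e, G.w (edge e) = w e

/-- The weighted oriented graph with finite vertex and edge types `V` and `E`. -/
noncomputable def ofMaps {V E : Type*} [Fintype V] [Fintype E] (src tgt : E → V) (w : E → ℕ)
    (hw : ∀ e, 0 < w e) : WOGraph where
  nV := Fintype.card V
  nE := Fintype.card E
  src e := Fintype.equivFin V (src ((Fintype.equivFin E).symm e))
  tgt e := Fintype.equivFin V (tgt ((Fintype.equivFin E).symm e))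
  w e := w ((Fintype.equivFin E).symm e)
  w_pos _ := hw _

namespace Presentation

variable {V E : Type*} {src tgt : E → V} {w : E → ℕ}

/-- The tautological presentation of `WOGraph.ofMaps`. -/
noncomputable def ofMaps [Fintype V] [Fintype E] (src tgt : E → V) (w : E → ℕ)
    (hw : ∀ e, 0 < w e) : (WOGraph.ofMaps src tgt w hw).Presentation src tgt w where
  vert := Fintype.equivFin V
  edge := Fintype.equivFin E
  src_edge _ := congrArg (fun e => Fintype.equivFin V (src e)) (Equiv.symm_apply_apply _ _)
  tgt_edge _ := congrArg (fun e => Fintype.equivFin V (tgt e)) (Equiv.symm_apply_apply _ _)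
  w_edge _ := congrArg w (Equiv.symm_apply_apply _ _)

variable (P : G.Presentation src tgt w)

lemma map_injective : Function.Injective (Sum.map P.vert P.edge) :=
  P.vert.injective.sumMap P.edge.injective

lemma infVert_vert {v : V} :
    G.InfVert (P.vert v) ↔ (∃! e, src e = v) ∧ ∀ e, tgt e ≠ v := by
  rw [infVert_iff, P.edge.bijective.existsUnique_iff, ← P.edge.forall_congr_right]
  simp [P.src_edge, P.tgt_edge]

lemma infEdge_edge {e : E} : G.InfEdge (P.edge e) ↔ G.InfVert (P.vert (src e)) := by
  rw [infEdge_iff, P.src_edge]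

lemma adj_edge_vert {e : E} {v : V} :
    G.Adj (P.edge e) (P.vert v) ↔ src e = v ∨ tgt e = v := by
  simp [Adj, P.src_edge, P.tgt_edge]

lemma div_vert [Fintype E] (v : V) :
    G.div (P.vert v) =
      ∑ e, (if tgt e = v then (w e : ℤ) else 0) - ∑ e, if src e = v then (w e : ℤ) else 0 := by
  rw [div, Finset.sum_filter, Finset.sum_filter, ← P.edge.sum_comp, ← P.edge.sum_comp]
  simp [P.src_edge, P.tgt_edge, P.w_edge]

lemma rank_lt_of_veStep {rk : V ⊕ E → ℕ} (hsrc : ∀ e, rk (Sum.inl (src e)) < rk (Sum.inr e))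
    (htgt : ∀ e, rk (Sum.inr e) < rk (Sum.inl (tgt e))) {x y : Fin G.nV ⊕ Fin G.nE}
    (h : G.veStep x y) :
    rk (Sum.map P.vert.symm P.edge.symm x) < rk (Sum.map P.vert.symm P.edge.symm y) := by
  rcases x with u | e <;> rcases y with v | e'
  · exact h.elim
  · obtain ⟨e, rfl⟩ := P.edge.surjective e'
    obtain rfl : G.src (P.edge e) = u := h
    simpa [P.src_edge] using hsrc e
  · obtain ⟨e, rfl⟩ := P.edge.surjective e
    obtain rfl : G.tgt (P.edge e) = v := h
    simpa [P.tgt_edge] using htgt e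
  · exact h.elim

end Presentation

end WOGraph

namespace IsFloorDiagram

variable {G : WOGraph} {g a : ℕ} (h : IsFloorDiagram G g a)
include h

lemma sum_div_floors : ∑ v ∈ G.floors, G.div v = 2 * a := by
  have hsplit := Finset.sum_filter_add_sum_filter_not Finset.univ G.InfVert G.div
  rw [G.sum_div, h.total_div] at hsplit
  rw [WOGraph.floors]
  linarith

lemma card_innerEdges_add_one : G.innerEdges.card + 1 = G.floors.card + g := by
  have hV := Finset.card_filter_add_card_filter_not (s := Finset.univ) G.InfVert
  have hE := Finset.card_filter_add_card_filter_not (s := Finset.univ) G.InfEdge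
  have hbetti := h.betti
  have hends := G.card_infEdge
  simp only [Finset.card_univ, Fintype.card_fin] at hV hE
  rw [WOGraph.innerEdges, WOGraph.floors]
  omega

lemma card_floors_add_card_doubleFloors : G.floors.card + G.doubleFloors.card = a := by
  have hdiv : ∀ v ∈ G.floors, G.div v = 2 + if G.div v = 4 then 2 else 0 := fun v hv => by
    rcases h.div_floor v (WOGraph.mem_floors.1 hv) with hv | hv <;> simp [hv]
  have hsum := h.sum_div_floors
  rw [Finset.sum_congr rfl hdiv, Finset.sum_add_distrib, ← Finset.sum_filter,
    ← WOGraph.doubleFloors] at hsum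
  simp only [Finset.sum_const, nsmul_eq_mul] at hsum
  omega

lemma card_doubleFloors_add_card_innerEdges :
    G.doubleFloors.card + G.innerEdges.card + 1 = a + g := by
  have hI := h.card_innerEdges_add_one
  have hF := h.card_floors_add_card_doubleFloors
  omega

lemma src_ne_tgt (e : Fin G.nE) : G.src e ≠ G.tgt e :=
  fun he => h.acyclic (G.src e) (.single ⟨e, rfl, he.symm⟩)

lemma src_mem_doubleFloors {e : Fin G.nE} (he : e ∈ G.innerEdges) :
    G.src e ∈ G.doubleFloors := by
  rw [WOGraph.mem_innerEdges, WOGraph.infEdge_iff] at he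
  refine WOGraph.mem_doubleFloors.2 ⟨he, (h.div_floor _ he).resolve_left fun hdiv => ?_⟩
  exact h.src_ne_tgt e (h.sink_of_two _ he hdiv e (Or.inl rfl)).symm

lemma exists_innerEdge_adj {v v' : Fin G.nV} (hv : v ∈ G.floors) (hv' : v' ∈ G.floors)
    (hne : v' ≠ v) : ∃ e ∈ G.innerEdges, G.Adj e v := by
  by_contra! hno
  rw [WOGraph.mem_floors] at hv hv'
  have hinf : ∀ e, G.Adj e v → G.InfVert (G.src e) := fun e he =>
    WOGraph.infEdge_iff.1 (not_not.1 fun hi => hno e (WOGraph.mem_innerEdges.2 hi) he)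
  have htgt : ∀ e, G.Adj e v → G.tgt e = v := fun e he =>
    he.resolve_left fun hs => hv (hs ▸ hinf e he)
  -- `v` and the leaves attached to it form a connected component.
  have hcomponent : ∀ u, Relation.ReflTransGen G.connStep v u →
      u = v ∨ ∃ e, G.src e = u ∧ G.tgt e = v := by
    intro u hu
    induction hu with
    | refl => exact Or.inl rfl
    | tail _ hstep ih =>
      obtain ⟨e', hstep⟩ := hstep
      rcases ih with rfl | ⟨e, rfl, he⟩
      · rcases hstep with ⟨hs, ht⟩ | ⟨hs, ht⟩
        · exact Or.inl (ht.symm.trans (htgt e' (Or.inl hs)))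
        · exact Or.inr ⟨e', hs, ht⟩
      · have hleaf := hinf e (Or.inr he)
        rcases hstep with ⟨hs, ht⟩ | ⟨-, ht⟩
        · exact Or.inl (ht.symm.trans ((hleaf.eq_of_src_eq hs) ▸ he))
        · exact (G.not_infVert_tgt e' (ht ▸ hleaf)).elim
  rcases hcomponent v' (h.conn.2 v v') with rfl | ⟨e, rfl, he⟩
  · exact hne rfl
  · exact hv' (hinf e (Or.inr he))

lemma w_eq_one_of_card_infVert (hcard : (Finset.univ.filter G.InfVert).card = 2 * a)
    {e : Fin G.nE} (he : G.InfEdge e) : G.w e = 1 := by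
  have hle : ∀ v ∈ Finset.univ.filter G.InfVert, G.div v ≤ -1 := fun v hv =>
    h.div_inf v (Finset.mem_filter.1 hv).2
  have hdiv := (Finset.sum_eq_sum_iff_of_le hle).1 (by simp [h.total_div, hcard]) (G.src e)
    (by simpa using WOGraph.infEdge_iff.1 he)
  rw [WOGraph.div_src_of_infEdge he] at hdiv
  omega

end IsFloorDiagram

namespace MarkedFD

variable {k g a : ℕ} {b : Fin k → ℕ} {μ₁ μ₂ : List ℕ} (X : MarkedFD k g a b μ₁ μ₂)

lemma mem_EdgeMu2 {e : Fin X.G.nE} :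
    e ∈ X.EdgeMu2 ↔ X.G.InfEdge e ∧ ∃ i, X.m (Sum.inl i) = Sum.inr e := by
  simp [EdgeMu2]

lemma card_EdgeMu2 : X.EdgeMu2.card = μ₂.length :=
  calc X.EdgeMu2.card = (X.EdgeMu2.val.map X.G.w).card := (Multiset.card_map _ _).symm
    _ = (μ₂ : Multiset ℕ).card := congrArg _ X.marking.mu2_edges
    _ = μ₂.length := Multiset.coe_card _

/-- The elements that are marked in every marked floor diagram: the floors of degree `2` and the
edges of `Edge°`. -/
noncomputable def core : Finset (Fin X.G.nV ⊕ Fin X.G.nE) :=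
  X.G.doubleFloors.disjSum X.G.innerEdges

lemma card_core_add_one : X.core.card + 1 = a + g := by
  rw [core, Finset.card_disjSum, X.fd.card_doubleFloors_add_card_innerEdges]

lemma lt_or_mem_EdgeMu2_or_mem_core (i : Fin (a + g + μ₁.length + μ₂.length - 1)) :
    (i : ℕ) < μ₁.length ∨ (∃ e ∈ X.EdgeMu2, X.m (Sum.inl i) = Sum.inr e) ∨
      X.m (Sum.inl i) ∈ X.core := by
  rcases hx : X.m (Sum.inl i) with v | e
  · by_cases hv : X.G.InfVert v
    · exact Or.inl ((X.marking.mu1_vert i).1 ⟨v, hv, hx⟩)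
    · have hdiv := (X.fd.div_floor v hv).resolve_left fun hdiv =>
        X.marking.no_floor_one v hv hdiv _ hx
      simp [core, hv, hdiv]
  · by_cases he : X.G.InfEdge e
    · exact Or.inr (Or.inl ⟨e, X.mem_EdgeMu2.2 ⟨he, i, hx⟩, rfl⟩)
    · simp [core, he]

lemma exists_mark_of_mem_core {x : Fin X.G.nV ⊕ Fin X.G.nE} (hx : x ∈ X.core) :
    ∃ i, X.m (Sum.inl i) = x := by
  have hinj : Function.Injective fun i => X.m (Sum.inl i) :=
    X.marking.inj.comp Sum.inl_injective
  let low := Finset.univ.filter fun i : Fin (a + g + μ₁.length + μ₂.length - 1) =>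
    (i : ℕ) < μ₁.length
  let ends := Finset.univ.filter fun i => ∃ e ∈ X.EdgeMu2, X.m (Sum.inl i) = Sum.inr e
  let inner := Finset.univ.filter fun i => X.m (Sum.inl i) ∈ X.core
  have hlow : low.card ≤ μ₁.length := by
    simpa using Finset.card_le_card_of_injOn (t := Finset.range μ₁.length) Fin.val
      (by simp [low, Set.MapsTo]) Fin.val_injective.injOn
  have hends : ends.card ≤ μ₂.length := by
    have himage : ends.image (fun i => X.m (Sum.inl i)) ⊆ X.EdgeMu2.image Sum.inr :=
      Finset.image_subset_iff.2 fun i hi => by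
        obtain ⟨e, he, hi⟩ := (Finset.mem_filter.1 hi).2
        exact Finset.mem_image.2 ⟨e, he, hi.symm⟩
    rw [← Finset.card_image_of_injective _ hinj]
    exact (Finset.card_le_card himage).trans (Finset.card_image_le.trans_eq X.card_EdgeMu2)
  have hcover : Finset.univ ⊆ low ∪ (ends ∪ inner) := fun i _ => by
    simpa [low, ends, inner] using X.lt_or_mem_EdgeMu2_or_mem_core i
  have himage : inner.image (fun i => X.m (Sum.inl i)) = X.core := by
    refine Finset.eq_of_subset_of_card_le
      (Finset.image_subset_iff.2 fun i hi => (Finset.mem_filter.1 hi).2) ?_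
    rw [Finset.card_image_of_injective _ hinj]
    have hcard := Finset.card_le_card hcover
    have hunion := Finset.card_union_le low (ends ∪ inner)
    have hunion' := Finset.card_union_le ends inner
    have hcore := X.card_core_add_one
    simp only [Finset.card_univ, Fintype.card_fin] at hcard
    omega
  rw [← himage, Finset.mem_image] at hx
  obtain ⟨i, -, hi⟩ := hx
  exact ⟨i, hi⟩

lemma w_eq_one_of_mem_EdgeMu1 (hμ₁ : ∀ x ∈ μ₁, x = 1) {e : Fin X.G.nE} (he : e ∈ X.EdgeMu1) :
    X.G.w e = 1 := by
  obtain ⟨i, hi, v, hv, hadj⟩ := (Finset.mem_filter.1 he).2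
  exact (X.marking.mu1_weight i hi v e hv hadj).trans (hμ₁ _ (List.get_mem _ _))

lemma w_eq_one_of_mem_EdgeMu2 (hμ₂ : ∀ x ∈ μ₂, x = 1) {e : Fin X.G.nE} (he : e ∈ X.EdgeMu2) :
    X.G.w e = 1 := by
  refine hμ₂ _ (Multiset.mem_coe.1 ?_)
  rw [← X.marking.mu2_edges]
  exact Multiset.mem_map_of_mem _ he

lemma multq_eq_prod_innerEdges (hμ₁ : ∀ x ∈ μ₁, x = 1) (hμ₂ : ∀ x ∈ μ₂, x = 1) :
    X.multq = ∏ e ∈ X.G.innerEdges, qInt (X.G.w e) ^ 2 := by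
  have hone : qInt 1 = 1 := by simp [qInt]
  rw [multq, Finset.prod_eq_one, Finset.prod_eq_one, Finset.prod_eq_one, one_mul, one_mul,
    one_mul, EdgeO, WOGraph.innerEdges]
  · intro e he
    simp [X.w_eq_one_of_mem_EdgeMu2 hμ₂ he]
  · intro e he
    simp [X.w_eq_one_of_mem_EdgeMu1 hμ₁ he, hone]
  · intro e he
    simp [X.w_eq_one_of_mem_EdgeMu2 hμ₂ he, hone]

end MarkedFD

/-- Marked floor diagrams of type `((1), (1))` for the class `a[L] − Σᵢ [Eᵢ]`. -/
abbrev UnitMarkedFD (k g a : ℕ) : Type :=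
  MarkedFD k g a (fun _ => 1) [1] [1]

namespace UnitMarkedFD

variable {k g a : ℕ} (X Y : UnitMarkedFD k g a)

/-- The marking restricted to `A₀`. -/
def base (p : Fin (a + g + 1)) : Fin X.G.nV ⊕ Fin X.G.nE :=
  X.m (Sum.inl p)

/-- The element marked by the single point of `Aᵢ`. -/
def exc (i : Fin k) : Fin X.G.nV ⊕ Fin X.G.nE :=
  X.m (Sum.inr ⟨i, 0⟩)

lemma base_injective : Function.Injective X.base :=
  X.marking.inj.comp Sum.inl_injective

lemma exc_injective : Function.Injective X.exc := fun _ _ h =>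
  congrArg Sigma.fst (Sum.inr_injective (X.marking.inj h))

lemma base_ne_exc (p : Fin (a + g + 1)) (i : Fin k) : X.base p ≠ X.exc i := fun h =>
  Sum.inl_ne_inr (X.marking.inj h)

lemma exists_m_eq_iff {x : Fin X.G.nV ⊕ Fin X.G.nE} :
    (∃ p, X.m p = x) ↔ (∃ p, X.base p = x) ∨ ∃ i, X.exc i = x := by
  constructor
  · rintro ⟨p | ⟨i, p⟩, rfl⟩
    · exact Or.inl ⟨p, rfl⟩
    · exact Or.inr ⟨i, by rw [exc, Fin.fin_one_eq_zero p]⟩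
  · rintro (⟨p, rfl⟩ | ⟨i, rfl⟩) <;> exact ⟨_, rfl⟩

lemma lt_of_transGen_base {p q : Fin (a + g + 1)}
    (h : Relation.TransGen X.G.veStep (X.base p) (X.base q)) : p < q :=
  X.marking.incr p q h

variable {X Y}

lemma equivalent_iff :
    X.Equivalent Y ↔ ∃ (φV : Fin X.G.nV ≃ Fin Y.G.nV) (φE : Fin X.G.nE ≃ Fin Y.G.nE),
      (∀ e, Y.G.src (φE e) = φV (X.G.src e)) ∧ (∀ e, Y.G.tgt (φE e) = φV (X.G.tgt e)) ∧
      (∀ e, Y.G.w (φE e) = X.G.w e) ∧ (∀ p, Y.base p = Sum.map φV φE (X.base p)) ∧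
      ∀ i, Y.exc i = Sum.map φV φE (X.exc i) := by
  constructor
  · rintro ⟨φV, φE, ψ, hsrc, htgt, hw, hbase, hexc, hm⟩
    refine ⟨φV, φE, hsrc, htgt, hw, fun p => ?_, fun i => ?_⟩
    · exact (congrArg Y.m (hbase p)).symm.trans (hm _)
    · obtain ⟨p, hp⟩ := hexc i 0
      rw [Fin.fin_one_eq_zero p] at hp
      exact (congrArg Y.m hp).symm.trans (hm _)
  · rintro ⟨φV, φE, hsrc, htgt, hw, hbase, hexc⟩
    refine ⟨φV, φE, Equiv.refl _, hsrc, htgt, hw, fun _ => rfl, fun i p => ⟨p, rfl⟩, ?_⟩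
    rintro (p | ⟨i, p⟩)
    · exact hbase p
    · rw [Fin.fin_one_eq_zero p]
      exact hexc i

variable (X)

lemma exists_base_zero : ∃ v, X.G.InfVert v ∧ X.base 0 = Sum.inl v :=
  (X.marking.mu1_vert (0 : Fin (a + g + 1))).2 Nat.one_pos

lemma not_infVert_of_base_succ {p : Fin (a + g)} {v : Fin X.G.nV}
    (h : X.base p.succ = Sum.inl v) : ¬ X.G.InfVert v := fun hv =>
  absurd ((X.marking.mu1_vert p.succ).1 ⟨v, hv, h⟩) (by simp)

lemma existsUnique_marked_infEdge : ∃! e, X.G.InfEdge e ∧ ∃ p, X.base p = Sum.inr e := by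
  obtain ⟨e, he⟩ := Finset.card_eq_one.1 X.card_EdgeMu2
  have hmem (e' : Fin X.G.nE) :
      (X.G.InfEdge e' ∧ ∃ p, X.base p = Sum.inr e') ↔ e' = e := by
    rw [← Finset.mem_singleton, ← he]
    exact X.mem_EdgeMu2.symm
  exact ⟨e, (hmem e).2 rfl, fun e' => (hmem e').1⟩

lemma exists_exc (i : Fin k) : ∃ v, X.G.InfVert v ∧ X.exc i = Sum.inl v :=
  X.marking.exc_vert i 0

end UnitMarkedFD

namespace UnitMarkedFD

variable {k g a : ℕ} (X : UnitMarkedFD k g a)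

lemma infVert_cases {v : Fin X.G.nV} (hv : X.G.InfVert v) :
    (∃ e, X.G.InfEdge e ∧ X.G.src e = v ∧ ∃ p, X.base p = Sum.inr e) ∨
      X.base 0 = Sum.inl v ∨ ∃ i, X.exc i = Sum.inl v := by
  obtain ⟨e, rfl⟩ := (WOGraph.infVert_iff.1 hv).1.exists
  rcases X.marking.inf_pair _ hv e (Or.inl rfl) with ⟨hm, -⟩ | ⟨hm, -⟩
  · rcases X.exists_m_eq_iff.1 hm with ⟨p, hp⟩ | hexc
    · obtain rfl : p = 0 := by
        by_contra hne
        obtain ⟨p, rfl⟩ := Fin.exists_succ_eq.2 hne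
        exact X.not_infVert_of_base_succ hp hv
      exact Or.inr (Or.inl hp)
    · exact Or.inr (Or.inr hexc)
  · rcases X.exists_m_eq_iff.1 hm with hbase | ⟨i, hi⟩
    · exact Or.inl ⟨e, WOGraph.infEdge_iff.2 hv, rfl, hbase⟩
    · obtain ⟨v, -, hv⟩ := X.exists_exc i
      simp [hv] at hi

lemma not_exists_m_eq_src {e : Fin X.G.nE} (he : X.G.InfEdge e) {p : Fin (a + g + 1)}
    (hp : X.base p = Sum.inr e) : ¬ ∃ q, X.m q = Sum.inl (X.G.src e) := by
  rcases X.marking.inf_pair _ (WOGraph.infEdge_iff.1 he) e (Or.inl rfl) with ⟨-, hm⟩ | ⟨-, hm⟩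
  · exact (hm ⟨_, hp⟩).elim
  · exact hm

/-- A numbering of the ends of a marked floor diagram: the end `0` is the one whose edge is marked,
by `j.succ`, the end `1` has its vertex marked by `0`, and the vertex of the end `i + 2` is marked
by the point of `Aᵢ`. -/
structure IsEndNumbering (leaf : Fin (k + 2) → Fin X.G.nV) (le : Fin (k + 2) → Fin X.G.nE)
    (j : Fin (a + g)) : Prop where
  leaf_injective : Function.Injective leaf
  infVert_iff : ∀ v, X.G.InfVert v ↔ ∃ i, leaf i = v
  src_eq : ∀ i, X.G.src (le i) = leaf i
  base_zero : X.base 0 = Sum.inl (leaf 1)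
  base_succ : X.base j.succ = Sum.inr (le 0)
  exc_eq : ∀ i, X.exc i = Sum.inl (leaf i.succ.succ)

lemma exists_isEndNumbering : ∃ leaf le j, X.IsEndNumbering leaf le j := by
  obtain ⟨ε, ⟨hε, p, hp⟩, hunique⟩ := X.existsUnique_marked_infEdge
  obtain ⟨v₀, hv₀, hbase⟩ := X.exists_base_zero
  choose v hv hexc using X.exists_exc
  obtain ⟨j, rfl⟩ : ∃ j, Fin.succ j = p :=
    Fin.exists_succ_eq.2 fun h => by simp [h, hbase] at hp
  have hunmarked := X.not_exists_m_eq_src hε hp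
  let leaf : Fin (k + 2) → Fin X.G.nV := Fin.cons (X.G.src ε) (Fin.cons v₀ v)
  have hleaf : ∀ i, X.G.InfVert (leaf i) :=
    Fin.cases (WOGraph.infEdge_iff.1 hε) (Fin.cases hv₀ hv)
  choose le hle using fun i => (WOGraph.infVert_iff.1 (hleaf i)).1.exists
  have hle₀ : ε = le 0 := (hle 0 ▸ hleaf 0 : X.G.InfVert (X.G.src (le 0))).eq_of_src_eq (hle 0).symm
  refine ⟨leaf, le, j, ?_, fun u => ⟨fun hu => ?_, fun ⟨i, hi⟩ => hi ▸ hleaf i⟩, hle, hbase,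
    hle₀ ▸ hp, hexc⟩
  · refine Fin.cons_injective_iff.2 ⟨?_, Fin.cons_injective_iff.2 ⟨?_, fun i i' h => ?_⟩⟩
    · rintro ⟨i, hi⟩
      cases i using Fin.cases with
      | zero => exact hunmarked ⟨_, hbase.trans (congrArg Sum.inl hi)⟩
      | succ i => exact hunmarked ⟨_, (hexc i).trans (congrArg Sum.inl hi)⟩
    · rintro ⟨i, rfl⟩
      exact X.base_ne_exc 0 i (hbase.trans (hexc i).symm)
    · exact X.exc_injective ((hexc i).trans ((congrArg Sum.inl h).trans (hexc i').symm))
  · rcases X.infVert_cases hu with ⟨e, he, rfl, hm⟩ | h | ⟨i, hi⟩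
    · exact ⟨0, congrArg X.G.src (hunique e ⟨he, hm⟩).symm⟩
    · exact ⟨1, Sum.inl_injective (hbase.symm.trans h)⟩
    · exact ⟨i.succ.succ, Sum.inl_injective ((hexc i).symm.trans hi)⟩

namespace IsEndNumbering

variable {X} {leaf : Fin (k + 2) → Fin X.G.nV} {le : Fin (k + 2) → Fin X.G.nE}
  {j : Fin (a + g)} (h : X.IsEndNumbering leaf le j)
include h

lemma infVert_leaf (i : Fin (k + 2)) : X.G.InfVert (leaf i) :=
  (h.infVert_iff _).2 ⟨i, rfl⟩

lemma infEdge_iff (e : Fin X.G.nE) : X.G.InfEdge e ↔ ∃ i, le i = e := by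
  rw [WOGraph.infEdge_iff, h.infVert_iff]
  constructor
  · rintro ⟨i, hi⟩
    have hinf := h.infVert_leaf i
    rw [hi] at hinf
    exact ⟨i, hinf.eq_of_src_eq ((h.src_eq i).trans hi)⟩
  · rintro ⟨i, rfl⟩
    exact ⟨i, (h.src_eq i).symm⟩

lemma edge_injective : Function.Injective le := fun i i' hi =>
  h.leaf_injective (by rw [← h.src_eq, ← h.src_eq, hi])

lemma card_infVert : (Finset.univ.filter X.G.InfVert).card = k + 2 := by
  have himage : Finset.univ.filter X.G.InfVert = Finset.univ.image leaf := by
    ext v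
    simp [h.infVert_iff]
  rw [himage, Finset.card_image_of_injective _ h.leaf_injective, Finset.card_fin]

lemma w_eq_one (ha : k + 2 = 2 * a) (i : Fin (k + 2)) : X.G.w (le i) = 1 :=
  X.fd.w_eq_one_of_card_infVert (h.card_infVert.trans ha) ((h.infEdge_iff _).2 ⟨i, rfl⟩)

lemma exists_mark_of_mem_core {x : Fin X.G.nV ⊕ Fin X.G.nE}
    (hx : x ∈ MarkedFD.core X) : ∃ p, p ≠ j ∧ X.base p.succ = x := by
  obtain ⟨p, hp⟩ : ∃ p, X.base p = x := MarkedFD.exists_mark_of_mem_core X hx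
  subst hp
  cases p using Fin.cases with
  | zero => simp [MarkedFD.core, h.base_zero, h.infVert_leaf] at hx
  | succ p =>
    refine ⟨p, fun hpj => ?_, rfl⟩
    subst hpj
    simp [MarkedFD.core, h.base_succ, h.infEdge_iff] at hx

end IsEndNumbering

end UnitMarkedFD

lemma WOGraph.connected_of_reflTransGen {G : WOGraph} {c : Fin G.nV}
    (h : ∀ v, Relation.ReflTransGen G.connStep v c) : G.Connected := by
  have : Std.Symm G.connStep := ⟨fun _ _ ⟨e, he⟩ => ⟨e, he.symm⟩⟩
  exact ⟨c.pos, fun u v => (h u).trans (Relation.ReflTransGen.stdSymm.symm _ _ (h v))⟩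

/-- The sources of the edges of a star of floors with `m` ends and `n + 1` outer floors. Its
vertices are the ends `inl i` and the floors `inr c`, with centre `inr 0`; its edges are the edges
`inl i` adjacent to the ends and the edges `inr l` from the centre to the outer floors
`inr l.succ`. -/
def starSrc {m n : ℕ} : Fin m ⊕ Fin (n + 1) → Fin m ⊕ Fin (n + 2) :=
  Sum.elim Sum.inl fun _ => Sum.inr 0

/-- The targets of the edges of a star of floors in which the end `i` is attached to the
floor `f i`. -/
def starTgt {m n : ℕ} (f : Fin m → Fin (n + 2)) : Fin m ⊕ Fin (n + 1) → Fin m ⊕ Fin (n + 2) :=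
  Sum.inr ∘ Sum.elim f Fin.succ

/-- The weights of the edges of a star of floors whose ends have weight `1`. -/
def starWeight {m n : ℕ} (u : Fin (n + 1) → ℕ) : Fin m ⊕ Fin (n + 1) → ℕ :=
  Sum.elim (fun _ => 1) u

/-- A presentation of `G` as a star of floors with ends attached by `f` and inner weights `u`. -/
abbrev StarPresentation (G : WOGraph) {m n : ℕ} (f : Fin m → Fin (n + 2)) (u : Fin (n + 1) → ℕ) :=
  G.Presentation starSrc (starTgt f) (starWeight u)

namespace StarPresentation

variable {G : WOGraph} {m n : ℕ} {f : Fin m → Fin (n + 2)} {u : Fin (n + 1) → ℕ}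
  (P : StarPresentation G f u)

lemma src_end (i : Fin m) : G.src (P.edge (Sum.inl i)) = P.vert (Sum.inl i) :=
  P.src_edge _

lemma src_inner (l : Fin (n + 1)) : G.src (P.edge (Sum.inr l)) = P.vert (Sum.inr 0) :=
  P.src_edge _

lemma tgt_end (i : Fin m) : G.tgt (P.edge (Sum.inl i)) = P.vert (Sum.inr (f i)) :=
  P.tgt_edge _

lemma tgt_inner (l : Fin (n + 1)) : G.tgt (P.edge (Sum.inr l)) = P.vert (Sum.inr l.succ) :=
  P.tgt_edge _

lemma div_end (i : Fin m) : G.div (P.vert (Sum.inl i)) = -1 := by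
  simp [P.div_vert, starSrc, starTgt, starWeight]

lemma div_centre :
    G.div (P.vert (Sum.inr 0)) =
      (Finset.univ.filter fun i => f i = 0).card - ∑ l, (u l : ℤ) := by
  simp [P.div_vert, starSrc, starTgt, starWeight]

lemma div_outer (l : Fin (n + 1)) :
    G.div (P.vert (Sum.inr l.succ)) =
      (Finset.univ.filter fun i => f i = l.succ).card + (u l : ℤ) := by
  simp [P.div_vert, starSrc, starTgt, starWeight, (Fin.succ_ne_zero l).symm]

lemma infVert_end (i : Fin m) : G.InfVert (P.vert (Sum.inl i)) := by
  refine P.infVert_vert.2 ⟨⟨Sum.inl i, rfl, ?_⟩, fun _ => Sum.inr_ne_inl⟩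
  rintro (i' | l) h
  · exact congrArg Sum.inl (Sum.inl_injective h)
  · exact (Sum.inr_ne_inl h).elim

lemma not_infVert_floor (hf : ∃ i, f i = 0) (c : Fin (n + 2)) :
    ¬ G.InfVert (P.vert (Sum.inr c)) := by
  intro h
  cases c using Fin.cases with
  | zero =>
    obtain ⟨i, hi⟩ := hf
    exact (P.infVert_vert.1 h).2 (Sum.inl i) (congrArg Sum.inr hi)
  | succ l => exact (P.infVert_vert.1 h).2 (Sum.inr l) rfl

lemma infEdge_end (i : Fin m) : G.InfEdge (P.edge (Sum.inl i)) :=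
  P.infEdge_edge.2 (P.infVert_end i)

lemma adj_end_iff {e : Fin G.nE} {i : Fin m} :
    G.Adj e (P.vert (Sum.inl i)) ↔ e = P.edge (Sum.inl i) := by
  constructor
  · rintro (h | h)
    · exact (P.infEdge_end i |> WOGraph.infEdge_iff.1).eq_of_src_eq (h.trans (P.src_end i).symm)
    · exact (G.not_infVert_tgt e (h ▸ P.infVert_end i)).elim
  · rintro rfl
    exact Or.inl (P.src_end i)

lemma infVert_iff (hf : ∃ i, f i = 0) (v : Fin G.nV) :
    G.InfVert v ↔ ∃ i, v = P.vert (Sum.inl i) := by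
  obtain ⟨i | c, rfl⟩ := P.vert.surjective v
  · simp [P.infVert_end]
  · simp [P.not_infVert_floor hf]

lemma not_infEdge_inner (hf : ∃ i, f i = 0) (l : Fin (n + 1)) :
    ¬ G.InfEdge (P.edge (Sum.inr l)) := fun h =>
  P.not_infVert_floor hf 0 (P.infEdge_edge.1 h)

include P

lemma prod_innerEdges {R : Type*} [CommMonoid R] (hf : ∃ i, f i = 0) (φ : ℕ → R) :
    ∏ e ∈ G.innerEdges, φ (G.w e) = ∏ l, φ (u l) := by
  rw [WOGraph.innerEdges, Finset.prod_filter, ← P.edge.prod_comp, Fintype.prod_sum_type]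
  simp [P.infEdge_end, P.not_infEdge_inner hf, P.w_edge, starWeight]

lemma card_vert : G.nV = m + (n + 2) := by
  simpa using (Fintype.card_congr P.vert).symm

lemma card_edge : G.nE = m + (n + 1) := by
  simpa using (Fintype.card_congr P.edge).symm

lemma connected : G.Connected := by
  have hstep (e : Fin G.nE) : G.connStep (G.src e) (G.tgt e) := ⟨e, Or.inl ⟨rfl, rfl⟩⟩
  have hfloor (c : Fin (n + 2)) :
      Relation.ReflTransGen G.connStep (P.vert (Sum.inr c)) (P.vert (Sum.inr 0)) := by
    cases c using Fin.cases with
    | zero => exact .refl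
    | succ l =>
      obtain ⟨e, he⟩ := hstep (P.edge (Sum.inr l))
      rw [P.src_inner, P.tgt_inner] at he
      exact .single ⟨e, he.symm⟩
  refine WOGraph.connected_of_reflTransGen (c := P.vert (Sum.inr 0)) fun v => ?_
  obtain ⟨i | c, rfl⟩ := P.vert.surjective v
  · exact .head (P.src_end i ▸ P.tgt_end i ▸ hstep _) (hfloor _)
  · exact hfloor c

lemma sum_div_infVert (hf : ∃ i, f i = 0) :
    ∑ v ∈ Finset.univ.filter (fun v => G.InfVert v), G.div v = -m := by
  rw [Finset.sum_filter, ← P.vert.sum_comp, Fintype.sum_sum_type]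
  simp [P.infVert_end, P.not_infVert_floor hf, P.div_end]

lemma isFloorDiagram {a : ℕ} (hf : ∃ i, f i = 0) (hacyclic : G.Acyclic) (ha : m = 2 * a)
    (hcentre : G.div (P.vert (Sum.inr 0)) = 4)
    (houter : ∀ l : Fin (n + 1),
      G.div (P.vert (Sum.inr l.succ)) = 2 ∨ G.div (P.vert (Sum.inr l.succ)) = 4) :
    IsFloorDiagram G 0 a where
  conn := P.connected
  acyclic := hacyclic
  betti := by rw [P.card_vert, P.card_edge]; rfl
  div_floor v hv := by
    obtain ⟨i | c, rfl⟩ := P.vert.surjective v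
    · exact (hv (P.infVert_end i)).elim
    · cases c using Fin.cases with
      | zero => exact Or.inr hcentre
      | succ l => exact houter l
  div_inf v hv := by
    obtain ⟨i | c, rfl⟩ := P.vert.surjective v
    · exact (P.div_end i).le
    · exact (P.not_infVert_floor hf c hv).elim
  sink_of_two v hv hdiv e he := by
    obtain ⟨i | c, rfl⟩ := P.vert.surjective v
    · exact (hv (P.infVert_end i)).elim
    · obtain ⟨e, rfl⟩ := P.edge.surjective e
      rw [P.adj_edge_vert] at he
      rw [P.tgt_edge, he.resolve_left]
      rintro hsrc
      cases e with
      | inl i => exact Sum.inl_ne_inr hsrc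
      | inr l =>
        obtain rfl : 0 = c := Sum.inr_injective hsrc
        rw [hcentre] at hdiv
        norm_num at hdiv
  total_div := by rw [P.sum_div_infVert hf, ha]; push_cast; rfl

end StarPresentation

/-- The position at which a floor or inner edge of a star would be marked, the edge to each outer
floor coming before `top`, the common position of the outer floors. -/
def starPos {n : ℕ} (top : ℕ) : Fin (n + 2) ⊕ Fin (n + 1) → ℕ :=
  Sum.elim (Fin.cons 0 fun _ => top) fun l => l + 1

/-- The marking pattern of a star of floors of degree `r + 1` with `n + 1` outer floors of
divergence `d` and with `k + 2` ends: `obj` lists the floors (`inl`) of degree `2` and the inner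
edges (`inr`) in the order of their marks, and `top` is the position of the outer floors, equal to
at least `r` if these are not marked. -/
structure StarTemplate (k r n d : ℕ) where
  obj : Fin r → Fin (n + 2) ⊕ Fin (n + 1)
  top : ℕ
  lt_top : n + 1 < top
  starPos_obj : ∀ s, starPos top (obj s) = s
  exists_obj_edge : ∀ l, ∃ s, obj s = Sum.inr l
  exists_obj_floor_or_le : ∀ c, (∃ s, obj s = Sum.inl c) ∨ r ≤ starPos top (Sum.inl c)
  eq_four_of_obj : ∀ s l, obj s = Sum.inl (Fin.succ l) → d = 4
  eq_two_or_four : d = 2 ∨ d = 4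
  card_ends : k + 2 = 4 + (n + 1) * d
  degree : k = 2 * r

/-- A marked star of floors with pattern `T`: the end `i` is attached to the floor `f i`, and the
edge of the end `0` is marked by `j.succ`. -/
@[ext]
structure StarDiagram {k r n d : ℕ} (T : StarTemplate k r n d) where
  f : Fin (k + 2) → Fin (n + 2)
  j : Fin (r + 1)
  card_fiber_lt : ∀ l : Fin (n + 1), (Finset.univ.filter fun i => f i = l.succ).card < d
  j_le : (j : ℕ) ≤ starPos T.top (Sum.inl (f 0))

namespace StarDiagram

variable {k r n d : ℕ} {T : StarTemplate k r n d} (D : StarDiagram T)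

/-- The weights of the inner edges, as forced by the divergences of the outer floors. -/
def u (l : Fin (n + 1)) : ℕ :=
  d - (Finset.univ.filter fun i => D.f i = l.succ).card

lemma u_pos (l : Fin (n + 1)) : 0 < D.u l :=
  Nat.sub_pos_of_lt (D.card_fiber_lt l)

lemma card_fiber_zero : (Finset.univ.filter fun i => D.f i = 0).card = 4 + ∑ l, D.u l := by
  have hfibers : ∑ c, (Finset.univ.filter fun i => D.f i = c).card = k + 2 := by
    simpa using Finset.card_eq_sum_card_fiberwise (s := Finset.univ) (t := Finset.univ)
      (f := D.f) (by simp) |>.symm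
  have houter : ∑ l, ((Finset.univ.filter fun i => D.f i = l.succ).card + D.u l) =
      (n + 1) * d := by
    simp [u, Nat.add_sub_cancel' (D.card_fiber_lt _).le]
  have hends := T.card_ends
  rw [Fin.sum_univ_succ] at hfibers
  rw [Finset.sum_add_distrib] at houter
  omega

lemma exists_f_eq_zero : ∃ i, D.f i = 0 := by
  have hpos : 0 < (Finset.univ.filter fun i => D.f i = 0).card := by
    rw [D.card_fiber_zero]; omega
  obtain ⟨i, hi⟩ := Finset.card_pos.1 hpos
  exact ⟨i, (Finset.mem_filter.1 hi).2⟩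

/-- The vertices and edges marked by `A₀`. -/
def base : Fin (r + 2) → (Fin (k + 2) ⊕ Fin (n + 2)) ⊕ (Fin (k + 2) ⊕ Fin (n + 1)) :=
  Fin.cons (Sum.inl (Sum.inl 1))
    (D.j.insertNth (Sum.inr (Sum.inl 0)) fun s => Sum.map Sum.inr Sum.inr (T.obj s))

@[simp] lemma base_zero : D.base 0 = Sum.inl (Sum.inl 1) := rfl

@[simp] lemma base_succ : D.base D.j.succ = Sum.inr (Sum.inl 0) := by
  simp [base]

@[simp] lemma base_succAbove (s : Fin r) :
    D.base (D.j.succAbove s).succ = Sum.map Sum.inr Sum.inr (T.obj s) := by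
  simp [base]

lemma base_cases (p : Fin (r + 2)) :
    p = 0 ∨ p = D.j.succ ∨ ∃ s, p = (D.j.succAbove s).succ := by
  cases p using Fin.cases with
  | zero => exact Or.inl rfl
  | succ p =>
    rcases eq_or_ne p D.j with rfl | hp
    · exact Or.inr (Or.inl rfl)
    · obtain ⟨s, rfl⟩ := Fin.exists_succAbove_eq hp
      exact Or.inr (Or.inr ⟨s, rfl⟩)

/-- The rank of a floor or inner edge: positions from `D.j` on are shifted by one, to leave room for
the mark of the end `0`. -/
def innerRank (x : Fin (n + 2) ⊕ Fin (n + 1)) : ℕ :=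
  2 * ((if starPos T.top x < D.j then starPos T.top x else starPos T.top x + 1) + 1)

/-- A rank function compatible with the orientation, equal to twice the mark on marked elements. -/
def rank : (Fin (k + 2) ⊕ Fin (n + 2)) ⊕ (Fin (k + 2) ⊕ Fin (n + 1)) → ℕ
  | Sum.inl (Sum.inl _) => 0
  | Sum.inr (Sum.inl i) => if i = 0 then 2 * (D.j + 1) else 1
  | Sum.inl (Sum.inr c) => D.innerRank (Sum.inl c)
  | Sum.inr (Sum.inr l) => D.innerRank (Sum.inr l)

lemma innerRank_lt {x y : Fin (n + 2) ⊕ Fin (n + 1)} (h : starPos T.top x < starPos T.top y) :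
    D.innerRank x < D.innerRank y := by
  rw [innerRank, innerRank]
  split_ifs <;> omega

lemma rank_src_lt (e : Fin (k + 2) ⊕ Fin (n + 1)) :
    D.rank (Sum.inl (starSrc e)) < D.rank (Sum.inr e) := by
  rcases e with i | l
  · simp only [starSrc, Sum.elim_inl, rank]
    split_ifs <;> omega
  · exact D.innerRank_lt (Nat.succ_pos _)

lemma rank_lt_tgt (e : Fin (k + 2) ⊕ Fin (n + 1)) :
    D.rank (Sum.inr e) < D.rank (Sum.inl (starTgt D.f e)) := by
  rcases e with i | l
  · simp only [starTgt, Function.comp_apply, Sum.elim_inl, rank, innerRank]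
    rcases eq_or_ne i 0 with rfl | hi
    · rw [if_pos rfl, if_neg D.j_le.not_gt]
      have hj := D.j_le
      omega
    · rw [if_neg hi]
      omega
  · exact D.innerRank_lt ((Nat.succ_le_succ (Nat.lt_succ_iff.1 l.2)).trans_lt T.lt_top)

lemma rank_base (p : Fin (r + 2)) : D.rank (D.base p) = 2 * p := by
  rcases D.base_cases p with rfl | rfl | ⟨s, rfl⟩
  · rfl
  · simp [rank]
  · have hinner (x : Fin (n + 2) ⊕ Fin (n + 1)) :
        D.rank (Sum.map Sum.inr Sum.inr x) = D.innerRank x := by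
      cases x <;> rfl
    rw [base_succAbove, hinner, innerRank, T.starPos_obj]
    simp [Fin.succAbove, Fin.lt_def, apply_ite]

lemma base_injective : Function.Injective D.base := fun p q h => by
  have hrank := congrArg D.rank h
  rw [rank_base, rank_base] at hrank
  omega

lemma base_eq_end_iff {p : Fin (r + 2)} {i : Fin (k + 2)} :
    D.base p = Sum.inl (Sum.inl i) ↔ p = 0 ∧ i = 1 := by
  rcases D.base_cases p with rfl | rfl | ⟨s, rfl⟩
  · simp [eq_comm]
  · simp
  · cases h : T.obj s <;> simp [h]

lemma base_eq_endEdge_iff {p : Fin (r + 2)} {i : Fin (k + 2)} :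
    D.base p = Sum.inr (Sum.inl i) ↔ p = D.j.succ ∧ i = 0 := by
  rcases D.base_cases p with rfl | rfl | ⟨s, rfl⟩
  · simp [(Fin.succ_ne_zero _).symm]
  · simp [eq_comm]
  · cases h : T.obj s <;> simp [h]

end StarDiagram

namespace StarDiagram

variable {k r n d : ℕ} {T : StarTemplate k r n d} (D : StarDiagram T)
  {G : WOGraph} (P : StarPresentation G D.f D.u)

lemma div_centre : G.div (P.vert (Sum.inr 0)) = 4 := by
  rw [StarPresentation.div_centre, D.card_fiber_zero]
  push_cast
  ring

lemma div_outer (l : Fin (n + 1)) : G.div (P.vert (Sum.inr l.succ)) = d := by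
  rw [StarPresentation.div_outer, u, Nat.cast_sub (D.card_fiber_lt l).le]
  ring

lemma lt_of_transGen_veStep {x y : (Fin (k + 2) ⊕ Fin (n + 2)) ⊕ (Fin (k + 2) ⊕ Fin (n + 1))}
    (h : Relation.TransGen G.veStep (Sum.map P.vert P.edge x) (Sum.map P.vert P.edge y)) :
    D.rank x < D.rank y := by
  simpa using WOGraph.lt_of_transGen_veStep
    (fun _ _ => P.rank_lt_of_veStep D.rank_src_lt D.rank_lt_tgt) h

include P in
lemma isFloorDiagram : IsFloorDiagram G 0 (r + 1) := by
  refine StarPresentation.isFloorDiagram P D.exists_f_eq_zero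
    (WOGraph.acyclic_of_rank fun _ _ => P.rank_lt_of_veStep D.rank_src_lt D.rank_lt_tgt)
    (by rw [T.degree]; ring) (D.div_centre P) fun l => ?_
  rw [D.div_outer P]
  exact_mod_cast T.eq_two_or_four

/-- The marking of a graph presented by the star diagram `D`. -/
def marking : MarkDom k 0 (r + 1) (fun _ => 1) 1 1 → Fin G.nV ⊕ Fin G.nE :=
  Sum.elim (fun p : Fin (r + 2) => Sum.map P.vert P.edge (D.base p))
    fun i => Sum.inl (P.vert (Sum.inl i.1.succ.succ))

lemma marking_inl_eq_end_iff {p : Fin (r + 2)} {i : Fin (k + 2)} :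
    D.marking P (Sum.inl p) = Sum.inl (P.vert (Sum.inl i)) ↔ p = 0 ∧ i = 1 := by
  rw [← D.base_eq_end_iff]
  exact P.map_injective.eq_iff (b := Sum.inl (Sum.inl i))

lemma marking_inl_eq_endEdge_iff {p : Fin (r + 2)} {i : Fin (k + 2)} :
    D.marking P (Sum.inl p) = Sum.inr (P.edge (Sum.inl i)) ↔ p = D.j.succ ∧ i = 0 := by
  rw [← D.base_eq_endEdge_iff]
  exact P.map_injective.eq_iff (b := Sum.inr (Sum.inl i))

lemma marking_injective : Function.Injective (D.marking P) := by
  refine Function.Injective.sumElim (P.map_injective.comp D.base_injective) ?_ fun p i h => ?_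
  · rintro ⟨i, p⟩ ⟨i', p'⟩ h
    obtain rfl : i = i' := by simpa using h
    rw [Subsingleton.elim p p']
  · obtain ⟨-, hi⟩ := (D.marking_inl_eq_end_iff P).1 h
    exact Fin.succ_ne_zero _ (Fin.succ_injective _ hi)

lemma exists_marking_eq_end_iff {i : Fin (k + 2)} :
    (∃ p, D.marking P p = Sum.inl (P.vert (Sum.inl i))) ↔ i ≠ 0 := by
  constructor
  · rintro ⟨p | ⟨i', p⟩, hp⟩
    · obtain ⟨-, rfl⟩ := (D.marking_inl_eq_end_iff P).1 hp
      exact one_ne_zero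
    · obtain rfl : i'.succ.succ = i := by simpa [marking] using hp
      exact Fin.succ_ne_zero _
  · intro hi
    obtain ⟨i, rfl⟩ := Fin.exists_succ_eq.2 hi
    cases i using Fin.cases with
    | zero => exact ⟨Sum.inl (0 : Fin (r + 2)), rfl⟩
    | succ i => exact ⟨Sum.inr ⟨i, 0⟩, rfl⟩

lemma exists_marking_eq_endEdge_iff {i : Fin (k + 2)} :
    (∃ p, D.marking P p = Sum.inr (P.edge (Sum.inl i))) ↔ i = 0 := by
  constructor
  · rintro ⟨p | i', hp⟩
    · exact ((D.marking_inl_eq_endEdge_iff P).1 hp).2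
    · exact (Sum.inl_ne_inr hp).elim
  · rintro rfl
    exact ⟨_, (D.marking_inl_eq_endEdge_iff P).2 ⟨rfl, rfl⟩⟩

lemma marking_ne_floor {c : Fin (n + 2)} (hc : G.div (P.vert (Sum.inr c)) = 2)
    (p : MarkDom k 0 (r + 1) (fun _ => 1) 1 1) :
    D.marking P p ≠ Sum.inl (P.vert (Sum.inr c)) := by
  rcases p with p | i
  · intro h
    replace h : D.base p = Sum.inl (Sum.inr c) := P.map_injective h
    rcases D.base_cases p with rfl | rfl | ⟨s, rfl⟩
    · simp at h
    · simp at h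
    · cases c using Fin.cases with
      | zero => rw [D.div_centre P] at hc; norm_num at hc
      | succ l =>
        obtain rfl := T.eq_four_of_obj s l (by cases hs : T.obj s <;> simp_all)
        rw [D.div_outer P] at hc
        norm_num at hc
  · simp [marking]

lemma marked_infEdges :
    (Finset.univ.filter fun e => G.InfEdge e ∧ ∃ p : Fin (r + 2),
      D.marking P (Sum.inl p) = Sum.inr e) = {P.edge (Sum.inl 0)} := by
  ext e
  rw [Finset.mem_filter, Finset.mem_singleton]
  constructor
  · rintro ⟨-, he, p, hp⟩
    obtain ⟨i, hi⟩ := (StarPresentation.infVert_iff P D.exists_f_eq_zero _).1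
      (WOGraph.infEdge_iff.1 he)
    obtain rfl := (StarPresentation.adj_end_iff P).1 (Or.inl hi)
    rw [((D.marking_inl_eq_endEdge_iff P).1 hp).2]
  · rintro rfl
    exact ⟨Finset.mem_univ _, StarPresentation.infEdge_end P 0, D.j.succ,
      (D.marking_inl_eq_endEdge_iff P).2 ⟨rfl, rfl⟩⟩

lemma isMarking : IsMarking k 0 (r + 1) (fun _ => 1) [1] [1] G (D.marking P) where
  inj := D.marking_injective P
  incr p q h := by
    have hrank := D.lt_of_transGen_veStep P h
    rw [D.rank_base, D.rank_base] at hrank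
    exact Fin.lt_def.2 (by omega)
  no_floor_one v hv hdiv p := by
    obtain ⟨i | c, rfl⟩ := P.vert.surjective v
    · exact (hv (StarPresentation.infVert_end P i)).elim
    · exact D.marking_ne_floor P hdiv p
  inf_pair v hv e he := by
    obtain ⟨i, rfl⟩ := (StarPresentation.infVert_iff P D.exists_f_eq_zero v).1 hv
    obtain rfl := (StarPresentation.adj_end_iff P).1 he
    exact (xor_iff_iff_not.2
      ((D.exists_marking_eq_end_iff P).trans (D.exists_marking_eq_endEdge_iff P).not.symm))
  exc_vert i _ := ⟨_, StarPresentation.infVert_end P i.succ.succ, rfl⟩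
  mu1_vert p := by
    constructor
    · rintro ⟨v, hv, hp⟩
      obtain ⟨i, rfl⟩ := (StarPresentation.infVert_iff P D.exists_f_eq_zero v).1 hv
      rw [((D.marking_inl_eq_end_iff P).1 hp).1]
      exact Nat.one_pos
    · intro hp
      obtain rfl : p = (0 : Fin (r + 2)) := Fin.ext (Nat.lt_one_iff.1 hp)
      exact ⟨_, StarPresentation.infVert_end P 1, rfl⟩
  floor_once i v _ e e' _ _ he he' := by
    have hedge {e : Fin G.nE} (he : ∃ (p : Fin 1) (u : Fin G.nV),
        D.marking P (Sum.inr ⟨i, p⟩) = Sum.inl u ∧ G.Adj e u) :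
        e = P.edge (Sum.inl i.succ.succ) := by
      obtain ⟨_, _, hu, hadj⟩ := he
      exact (StarPresentation.adj_end_iff P).1 ((Sum.inl_injective hu).symm ▸ hadj)
    exact (hedge he).trans (hedge he').symm
  mu1_weight p hp v e hv he := by
    obtain rfl : p = (0 : Fin (r + 2)) := Fin.ext (Nat.lt_one_iff.1 hp)
    obtain rfl : P.vert (Sum.inl 1) = v := Sum.inl_injective hv
    obtain rfl := (StarPresentation.adj_end_iff P).1 he
    exact P.w_edge _
  mu2_edges := by
    refine (congrArg (fun s : Finset _ => s.val.map G.w) (D.marked_infEdges P)).trans ?_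
    exact congrArg (fun w : ℕ => ({w} : Multiset ℕ)) (P.w_edge _)

end StarDiagram

namespace StarDiagram

variable {k r n d : ℕ} {T : StarTemplate k r n d}

/-- The marked floor diagram of a star diagram. -/
noncomputable def toMarkedFD (D : StarDiagram T) : UnitMarkedFD k 0 (r + 1) :=
  let P : StarPresentation _ D.f D.u := WOGraph.Presentation.ofMaps starSrc (starTgt D.f)
    (starWeight D.u) (Sum.rec (fun _ => Nat.one_pos) D.u_pos)
  ⟨_, D.marking P, D.isFloorDiagram P, D.isMarking P⟩

/-- A presentation of a marked floor diagram by the star diagram `D`. -/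
structure Presentation (D : StarDiagram T) (X : UnitMarkedFD k 0 (r + 1)) extends
    X.G.Presentation starSrc (starTgt D.f) (starWeight D.u) where
  base_eq : ∀ p, X.base p = Sum.map vert edge (D.base p)
  exc_eq : ∀ i, X.exc i = Sum.inl (vert (Sum.inl i.succ.succ))

namespace Presentation

/-- The tautological presentation of `StarDiagram.toMarkedFD`. -/
noncomputable def toMarkedFD (D : StarDiagram T) : D.Presentation D.toMarkedFD where
  toPresentation := .ofMaps starSrc (starTgt D.f) (starWeight D.u) _
  base_eq _ := rfl
  exc_eq _ := rfl

variable {D D' : StarDiagram T} {X Y : UnitMarkedFD k 0 (r + 1)}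

lemma multq_eq (P : D.Presentation X) : X.multq = ∏ l, qInt (D.u l) ^ 2 := by
  rw [X.multq_eq_prod_innerEdges (by simp) (by simp)]
  exact StarPresentation.prod_innerEdges P.toPresentation D.exists_f_eq_zero (qInt · ^ 2)

lemma equivalent (P : D.Presentation X) (Q : D.Presentation Y) : X.Equivalent Y := by
  refine UnitMarkedFD.equivalent_iff.2 ⟨P.vert.symm.trans Q.vert, P.edge.symm.trans Q.edge,
    P.edge.forall_congr_right.1 fun e => ?_, P.edge.forall_congr_right.1 fun e => ?_,
    P.edge.forall_congr_right.1 fun e => ?_, fun p => ?_, fun i => ?_⟩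
  · simp [P.src_edge, Q.src_edge]
  · simp [P.tgt_edge, Q.tgt_edge]
  · simp [P.w_edge, Q.w_edge]
  · rw [P.base_eq, Q.base_eq]
    cases D.base p <;> simp
  · simp [P.exc_eq, Q.exc_eq]

lemma nonempty_of_equivalent (Q : D.Presentation Y) (h : X.Equivalent Y) :
    Nonempty (D.Presentation X) := by
  obtain ⟨φV, φE, hsrc, htgt, hw, hbase, hexc⟩ := UnitMarkedFD.equivalent_iff.1 h
  have hmap := Sum.map_injective.2 ⟨φV.injective, φE.injective⟩
  exact ⟨{
    vert := Q.vert.trans φV.symm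
    edge := Q.edge.trans φE.symm
    src_edge e := φV.injective (by simp [← hsrc, Q.src_edge])
    tgt_edge e := φV.injective (by simp [← htgt, Q.tgt_edge])
    w_edge e := by simp [← hw, Q.w_edge]
    base_eq p := hmap (by rw [← hbase, Q.base_eq]; cases D.base p <;> simp)
    exc_eq i := hmap (by simp [← hexc, Q.exc_eq]) }⟩

section Unique

variable (P : D.Presentation X) (Q : D'.Presentation X)
include P Q

lemma end_zero_eq : D.j = D'.j ∧ P.vert (Sum.inl 0) = Q.vert (Sum.inl 0) := by
  have hP : X.base D.j.succ = Sum.inr (P.edge (Sum.inl 0)) := by simp [P.base_eq]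
  have hQ : X.base D'.j.succ = Sum.inr (Q.edge (Sum.inl 0)) := by simp [Q.base_eq]
  have hedge : P.edge (Sum.inl 0) = Q.edge (Sum.inl 0) := X.existsUnique_marked_infEdge.unique
    ⟨StarPresentation.infEdge_end P.toPresentation 0, _, hP⟩
    ⟨StarPresentation.infEdge_end Q.toPresentation 0, _, hQ⟩
  refine ⟨Fin.succ_injective _ (X.base_injective (hP.trans (hedge ▸ hQ.symm))), ?_⟩
  exact (P.src_edge (Sum.inl 0)).symm.trans
    ((congrArg X.G.src hedge).trans (Q.src_edge (Sum.inl 0)))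

lemma end_eq (i : Fin (k + 2)) : P.edge (Sum.inl i) = Q.edge (Sum.inl i) := by
  refine (StarPresentation.adj_end_iff Q.toPresentation).1 (Or.inl ?_)
  suffices hvert : P.vert (Sum.inl i) = Q.vert (Sum.inl i) from (P.src_edge _).trans hvert
  cases i using Fin.cases with
  | zero => exact (P.end_zero_eq Q).2
  | succ i =>
    cases i using Fin.cases with
    | zero => exact Sum.inl_injective ((P.base_eq 0).symm.trans (Q.base_eq 0))
    | succ i => exact Sum.inl_injective ((P.exc_eq i).symm.trans (Q.exc_eq i))

lemma innerEdge_eq (l : Fin (n + 1)) : P.edge (Sum.inr l) = Q.edge (Sum.inr l) := by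
  obtain ⟨s, hs⟩ := T.exists_obj_edge l
  have hP : X.base (D.j.succAbove s).succ = Sum.inr (P.edge (Sum.inr l)) := by
    simp [P.base_eq, hs]
  have hQ : X.base (D'.j.succAbove s).succ = Sum.inr (Q.edge (Sum.inr l)) := by
    simp [Q.base_eq, hs]
  rw [(P.end_zero_eq Q).1] at hP
  exact Sum.inr_injective (hP.symm.trans hQ)

lemma floor_eq (c : Fin (n + 2)) : P.vert (Sum.inr c) = Q.vert (Sum.inr c) := by
  cases c using Fin.cases with
  | zero =>
    exact (P.src_edge (Sum.inr 0)).symm.trans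
      ((congrArg X.G.src (P.innerEdge_eq Q 0)).trans (Q.src_edge (Sum.inr 0)))
  | succ l =>
    exact (P.tgt_edge (Sum.inr l)).symm.trans
      ((congrArg X.G.tgt (P.innerEdge_eq Q l)).trans (Q.tgt_edge (Sum.inr l)))

lemma starDiagram_eq : D = D' := by
  refine StarDiagram.ext (funext fun i => ?_) (P.end_zero_eq Q).1
  have htgt : P.vert (Sum.inr (D.f i)) = Q.vert (Sum.inr (D'.f i)) :=
    (P.tgt_edge (Sum.inl i)).symm.trans
      ((congrArg X.G.tgt (P.end_eq Q i)).trans (Q.tgt_edge (Sum.inl i)))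
  exact Sum.inr_injective (P.vert.injective (htgt.trans (P.floor_eq Q _).symm))

end Unique

end Presentation

lemma equivalent_toMarkedFD_iff {D : StarDiagram T} {X : UnitMarkedFD k 0 (r + 1)} :
    X.Equivalent D.toMarkedFD ↔ Nonempty (D.Presentation X) :=
  ⟨(Presentation.toMarkedFD D).nonempty_of_equivalent, fun ⟨P⟩ => P.equivalent (.toMarkedFD D)⟩

end StarDiagram

lemma bijective_sumElim {α β γ : Type*} {p : γ → Prop} {f : α → γ} {g : β → γ}
    (hf : Function.Injective f) (hg : Function.Injective g) (hfp : ∀ c, p c ↔ ∃ a, f a = c)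
    (hgp : ∀ c, ¬ p c ↔ ∃ b, g b = c) : Function.Bijective (Sum.elim f g) := by
  refine ⟨hf.sumElim hg fun a b hab => ?_, fun c => Sum.exists.2 ?_⟩
  · exact (hgp (g b)).2 ⟨b, rfl⟩ ((hfp _).2 ⟨a, hab⟩)
  · exact (em (p c)).imp (hfp c).1 (hgp c).1

/-- A numbering of the floors and inner edges of `G` as a star: the inner edge `ie l` joins the
centre `fl 0` to the outer floor `fl l.succ`, of divergence `d`. -/
structure IsStarNumbering (G : WOGraph) {n : ℕ} (d : ℕ) (fl : Fin (n + 2) → Fin G.nV)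
    (ie : Fin (n + 1) → Fin G.nE) : Prop where
  floor_injective : Function.Injective fl
  mem_floors : ∀ v, v ∈ G.floors ↔ ∃ c, fl c = v
  edge_injective : Function.Injective ie
  mem_innerEdges : ∀ e, e ∈ G.innerEdges ↔ ∃ l, ie l = e
  src_eq : ∀ l, G.src (ie l) = fl 0
  tgt_eq : ∀ l, G.tgt (ie l) = fl l.succ
  div_succ : ∀ l, G.div (fl (Fin.succ l)) = d

/-- The floors of a star with inner edges `ie`, numbered as in `IsStarNumbering`. -/
def WOGraph.starFloors (G : WOGraph) {n : ℕ} (ie : Fin (n + 1) → Fin G.nE) :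
    Fin (n + 2) → Fin G.nV :=
  Fin.cons (G.src (ie 0)) (G.tgt ∘ ie)

lemma IsFloorDiagram.isStarNumbering {G : WOGraph} {a n d : ℕ} (h : IsFloorDiagram G 0 a)
    {ie : Fin (n + 1) → Fin G.nE} (hinj : Function.Injective ie)
    (hmem : ∀ e, e ∈ G.innerEdges ↔ ∃ l, ie l = e) (hsrc : ∀ l, G.src (ie l) = G.src (ie 0))
    (hdiv : ∀ v ∈ G.floors, v ≠ G.src (ie 0) → G.div v = d) :
    IsStarNumbering G d (G.starFloors ie) ie := by
  have hc : G.src (ie 0) ∈ G.floors :=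
    Finset.mem_of_mem_filter _ (h.src_mem_doubleFloors ((hmem _).2 ⟨0, rfl⟩))
  have htgt : ∀ l, G.tgt (ie l) ∈ G.floors := fun l =>
    WOGraph.mem_floors.2 (G.not_infVert_tgt _)
  have hfloors : ∀ v, v ∈ G.floors ↔ ∃ i, G.starFloors ie i = v := by
    refine fun v => ⟨fun hv => ?_, ?_⟩
    · rcases eq_or_ne (G.src (ie 0)) v with rfl | hne
      · exact ⟨0, rfl⟩
      · obtain ⟨e, he, hadj⟩ := h.exists_innerEdge_adj hv hc hne
        obtain ⟨l, rfl⟩ := (hmem e).1 he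
        exact ⟨l.succ, hadj.resolve_left fun hl => hne ((hsrc l).symm.trans hl)⟩
    · rintro ⟨i, rfl⟩
      exact Fin.cases hc htgt i
  have hedges_image : Finset.univ.image ie = G.innerEdges := by
    ext e
    simp [hmem, -WOGraph.mem_innerEdges]
  have hfloors_image : Finset.univ.image (G.starFloors ie) = G.floors := by
    ext v
    simp [hfloors, -WOGraph.mem_floors]
  have hcard : G.floors.card = (Finset.univ : Finset (Fin (n + 2))).card := by
    have hinner := h.card_innerEdges_add_one
    rw [← hedges_image, Finset.card_image_of_injective _ hinj, Finset.card_fin] at hinner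
    rw [Finset.card_fin]
    exact hinner.symm
  refine ⟨fun i i' => ?_, hfloors, hinj, hmem, hsrc, fun _ => rfl,
    fun l => hdiv _ (htgt l) fun hl => h.src_ne_tgt _ ((hsrc l).trans hl.symm)⟩
  exact Finset.card_image_iff.1 ((congrArg Finset.card hfloors_image).trans hcard)
    (Finset.mem_coe.2 (Finset.mem_univ i)) (Finset.mem_coe.2 (Finset.mem_univ i'))

lemma UnitMarkedFD.IsEndNumbering.exists_starPresentation {k g a n d : ℕ}
    {X : UnitMarkedFD k g a} {leaf : Fin (k + 2) → Fin X.G.nV} {le : Fin (k + 2) → Fin X.G.nE}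
    {j : Fin (a + g)} (h : X.IsEndNumbering leaf le j) (ha : k + 2 = 2 * a)
    {fl : Fin (n + 2) → Fin X.G.nV} {ie : Fin (n + 1) → Fin X.G.nE}
    (hs : IsStarNumbering X.G d fl ie) :
    ∃ (f : Fin (k + 2) → Fin (n + 2)) (P : StarPresentation X.G f (X.G.w ∘ ie)),
      ⇑P.vert = Sum.elim leaf fl ∧ ⇑P.edge = Sum.elim le ie := by
  have hvert : Function.Bijective (Sum.elim leaf fl) :=
    bijective_sumElim h.leaf_injective hs.floor_injective h.infVert_iff
      fun v => WOGraph.mem_floors.symm.trans (hs.mem_floors v)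
  have hedge : Function.Bijective (Sum.elim le ie) :=
    bijective_sumElim h.edge_injective hs.edge_injective h.infEdge_iff
      fun e => WOGraph.mem_innerEdges.symm.trans (hs.mem_innerEdges e)
  choose f hf using fun i =>
    (hs.mem_floors _).1 (WOGraph.mem_floors.2 (X.G.not_infVert_tgt (le i)))
  exact ⟨f, {
    vert := .ofBijective _ hvert
    edge := .ofBijective _ hedge
    src_edge := Sum.rec h.src_eq hs.src_eq
    tgt_edge := Sum.rec (fun i => (hf i).symm) hs.tgt_eq
    w_edge := Sum.rec (h.w_eq_one ha) fun _ => rfl }, rfl, rfl⟩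

namespace StarTemplate

variable {k r n d : ℕ} (T : StarTemplate k r n d) {X : UnitMarkedFD k 0 (r + 1)}
  {leaf : Fin (k + 2) → Fin X.G.nV} {le : Fin (k + 2) → Fin X.G.nE} {j : Fin (r + 1)}
  {fl : Fin (n + 2) → Fin X.G.nV} {ie : Fin (n + 1) → Fin X.G.nE}

lemma le_starPos (h : X.IsEndNumbering leaf le j)
    (hobj : ∀ s, X.base (j.succAbove s).succ = Sum.map fl ie (T.obj s)) {c : Fin (n + 2)}
    (hc : X.G.tgt (le 0) = fl c) : (j : ℕ) ≤ starPos T.top (Sum.inl c) := by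
  rcases T.exists_obj_floor_or_le c with ⟨s, hs⟩ | hle
  · have hfloor : X.base (j.succAbove s).succ = Sum.inl (fl c) := by rw [hobj, hs]; rfl
    have hlt : j.succ < (j.succAbove s).succ := X.lt_of_transGen_base (by
      rw [hfloor, h.base_succ]
      exact .single hc)
    rw [← hs, T.starPos_obj]
    exact (Fin.lt_succAbove_iff_le_castSucc _ _).1 (Fin.succ_lt_succ_iff.1 hlt)
  · exact (Nat.lt_succ_iff.1 j.2).trans hle

lemma exists_presentation (h : X.IsEndNumbering leaf le j) (hs : IsStarNumbering X.G d fl ie)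
    (hobj : ∀ s, X.base (j.succAbove s).succ = Sum.map fl ie (T.obj s)) :
    ∃ D : StarDiagram T, Nonempty (D.Presentation X) := by
  obtain ⟨f, P, hvert, hedge⟩ := h.exists_starPresentation (by rw [T.degree]; ring) hs
  have hdiv (l : Fin (n + 1)) :
      (Finset.univ.filter fun i => f i = l.succ).card + X.G.w (ie l) = d := by
    have houter := StarPresentation.div_outer P l
    rw [hvert, Sum.elim_inr, hs.div_succ] at houter
    exact_mod_cast houter.symm
  have hf : X.G.tgt (le 0) = fl (f 0) := by
    have htgt := P.tgt_edge (Sum.inl 0)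
    rwa [hvert, hedge] at htgt
  let D : StarDiagram T :=
    { f := f
      j := j
      card_fiber_lt := fun l => by have := hdiv l; have := X.G.w_pos (ie l); omega
      j_le := T.le_starPos h hobj hf }
  have hu : X.G.w ∘ ie = D.u := funext fun l => (Nat.sub_eq_of_eq_add' (hdiv l).symm).symm
  have hbase (p : Fin (r + 2)) : X.base p = Sum.map P.vert P.edge (D.base p) := by
    rw [hvert, hedge]
    rcases D.base_cases p with rfl | rfl | ⟨s, rfl⟩
    · exact h.base_zero
    · rw [D.base_succ]
      exact h.base_succ
    · rw [D.base_succAbove]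
      refine (hobj s).trans ?_
      cases T.obj s <;> rfl
  exact ⟨D, ⟨{
    vert := P.vert
    edge := P.edge
    src_edge := P.src_edge
    tgt_edge := P.tgt_edge
    w_edge := hu ▸ P.w_edge
    base_eq := hbase
    exc_eq := fun i => by rw [hvert]; exact h.exc_eq i }⟩⟩

end StarTemplate

namespace UnitMarkedFD

variable {k r : ℕ} {X : UnitMarkedFD k 0 (r + 1)} {leaf : Fin (k + 2) → Fin X.G.nV}
  {le : Fin (k + 2) → Fin X.G.nE} {j : Fin (r + 1)}

lemma IsEndNumbering.exists_base_succAbove (h : X.IsEndNumbering leaf le j)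
    {x : Fin X.G.nV ⊕ Fin X.G.nE} (hx : x ∈ MarkedFD.core X) :
    ∃ s : Fin r, X.base (j.succAbove s).succ = x := by
  obtain ⟨p, hp, hx⟩ := h.exists_mark_of_mem_core hx
  obtain ⟨s, hs⟩ := Fin.exists_succAbove_eq (x := p) hp
  exact ⟨s, hs ▸ hx⟩

lemma lt_of_veStep_of_base_succAbove {s t : Fin r} {x y : Fin X.G.nV ⊕ Fin X.G.nE}
    (hs : X.base (j.succAbove s).succ = x) (ht : X.base (j.succAbove t).succ = y)
    (h : X.G.veStep x y) : s < t :=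
  Fin.succAbove_lt_succAbove_iff.1 (Fin.succ_lt_succ_iff.1
    (X.lt_of_transGen_base (.single (hs ▸ ht ▸ h))))

end UnitMarkedFD

/-- The pattern of two floors of degree `2` joined by an edge. -/
def oneStar : StarTemplate 6 3 0 4 where
  obj := ![Sum.inl 0, Sum.inr 0, Sum.inl 1]
  top := 2
  lt_top := by norm_num
  starPos_obj := by decide
  exists_obj_edge := by decide
  exists_obj_floor_or_le := by decide
  eq_four_of_obj _ _ _ := rfl
  eq_two_or_four := Or.inr rfl
  card_ends := rfl
  degree := rfl

/-- The pattern of a floor of degree `2` joined to two floors of degree `1`, the outer floors being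
numbered in the order of the marks of their inner edges. -/
def twoStar : StarTemplate 6 3 1 2 where
  obj := ![Sum.inl 0, Sum.inr 0, Sum.inr 1]
  top := 3
  lt_top := by norm_num
  starPos_obj := by decide
  exists_obj_edge := by decide
  exists_obj_floor_or_le := by decide
  eq_four_of_obj := by decide
  eq_two_or_four := Or.inl rfl
  card_ends := rfl
  degree := rfl

namespace IsFloorDiagram

variable {G : WOGraph} (h : IsFloorDiagram G 0 4)
include h

lemma card_innerEdges_eq_one_or_two : G.innerEdges.card = 1 ∧ G.doubleFloors = G.floors ∨
    G.innerEdges.card = 2 ∧ G.doubleFloors.card = 1 := by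
  have hI := h.card_innerEdges_add_one
  have hF := h.card_floors_add_card_doubleFloors
  have hsub : G.doubleFloors ⊆ G.floors := Finset.filter_subset _ _
  have hle := Finset.card_le_card hsub
  obtain ⟨e, he⟩ : G.innerEdges.Nonempty := Finset.card_pos.1 (by omega)
  have hpos := Finset.card_pos.2 ⟨_, h.src_mem_doubleFloors he⟩
  have hcases : G.innerEdges.card = 1 ∧ G.doubleFloors.card = G.floors.card ∨
      G.innerEdges.card = 2 ∧ G.doubleFloors.card = 1 := by omega
  exact hcases.imp_left (And.imp_right fun hcard => Finset.eq_of_subset_of_card_le hsub hcard.ge)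

lemma isStarNumbering_single (hdouble : G.doubleFloors = G.floors) {e : Fin G.nE}
    (he : G.innerEdges = {e}) : IsStarNumbering G 4 (G.starFloors ![e]) ![e] := by
  refine h.isStarNumbering (Function.injective_of_subsingleton (α := Fin 1) _) (fun e' => ?_)
    (fun l => by rw [Subsingleton.elim (α := Fin 1) l 0]) fun v hv _ => ?_
  · simp [he, eq_comm, -WOGraph.mem_innerEdges]
  · exact (WOGraph.mem_doubleFloors.1 (hdouble ▸ hv)).2

lemma isStarNumbering_pair (hcard : G.doubleFloors.card = 1) {e₁ e₂ : Fin G.nE} (hne : e₁ ≠ e₂)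
    (he : G.innerEdges = {e₁, e₂}) : IsStarNumbering G 2 (G.starFloors ![e₁, e₂]) ![e₁, e₂] := by
  obtain ⟨c, hc⟩ := Finset.card_eq_one.1 hcard
  have hmem (e : Fin G.nE) : e ∈ G.innerEdges ↔ ∃ l, ![e₁, e₂] l = e := by
    simp [he, Fin.exists_fin_two, eq_comm, -WOGraph.mem_innerEdges]
  have hsrc (l : Fin 2) : G.src (![e₁, e₂] l) = c :=
    Finset.mem_singleton.1 (hc ▸ h.src_mem_doubleFloors ((hmem _).2 ⟨l, rfl⟩))
  refine h.isStarNumbering (fun l l' => ?_) hmem (fun l => (hsrc l).trans (hsrc 0).symm)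
    fun v hv hvc => (h.div_floor v (WOGraph.mem_floors.1 hv)).resolve_right fun hdiv => ?_
  · fin_cases l <;> fin_cases l' <;> simp [hne, hne.symm]
  · exact hvc ((Finset.mem_singleton.1 (hc ▸ Finset.mem_filter.2 ⟨hv, hdiv⟩)).trans (hsrc 0).symm)

end IsFloorDiagram

namespace UnitMarkedFD

lemma exists_oneStar_presentation (X : UnitMarkedFD 6 0 4) (hcard : X.G.innerEdges.card = 1)
    (hdouble : X.G.doubleFloors = X.G.floors) :
    ∃ D : StarDiagram oneStar, Nonempty (D.Presentation X) := by
  obtain ⟨leaf, le, j, hend⟩ := X.exists_isEndNumbering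
  obtain ⟨e, he⟩ := Finset.card_eq_one.1 hcard
  have hinner : e ∈ X.G.innerEdges := by simp [he, -WOGraph.mem_innerEdges]
  have htgt : X.G.tgt e ∈ X.G.doubleFloors := by
    rw [hdouble]
    exact WOGraph.mem_floors.2 (X.G.not_infVert_tgt e)
  obtain ⟨s₀, hs₀⟩ := hend.exists_base_succAbove (r := 3)
    (Finset.inl_mem_disjSum.2 (X.fd.src_mem_doubleFloors hinner))
  obtain ⟨s₁, hs₁⟩ := hend.exists_base_succAbove (r := 3) (Finset.inr_mem_disjSum.2 hinner)
  obtain ⟨s₂, hs₂⟩ := hend.exists_base_succAbove (r := 3) (Finset.inl_mem_disjSum.2 htgt)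
  have hlt₁ : s₀ < s₁ := lt_of_veStep_of_base_succAbove (r := 3) hs₀ hs₁ rfl
  have hlt₂ : s₁ < s₂ := lt_of_veStep_of_base_succAbove (r := 3) hs₁ hs₂ rfl
  obtain ⟨rfl, rfl, rfl⟩ : s₀ = 0 ∧ s₁ = 1 ∧ s₂ = 2 := by omega
  exact oneStar.exists_presentation hend (X.fd.isStarNumbering_single hdouble he)
    (Fin.forall_fin_succ.2 ⟨hs₀, Fin.forall_fin_two.2 ⟨hs₁, hs₂⟩⟩)

lemma exists_twoStar_presentation (X : UnitMarkedFD 6 0 4) (hcard : X.G.innerEdges.card = 2)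
    (hdouble : X.G.doubleFloors.card = 1) :
    ∃ D : StarDiagram twoStar, Nonempty (D.Presentation X) := by
  obtain ⟨leaf, le, j, hend⟩ := X.exists_isEndNumbering
  obtain ⟨e₁, e₂, hne, he⟩ := Finset.card_eq_two.1 hcard
  have hinner₁ : e₁ ∈ X.G.innerEdges := by simp [he, -WOGraph.mem_innerEdges]
  have hinner₂ : e₂ ∈ X.G.innerEdges := by simp [he, -WOGraph.mem_innerEdges]
  obtain ⟨s₀, hs₀⟩ := hend.exists_base_succAbove (r := 3)
    (Finset.inl_mem_disjSum.2 (X.fd.src_mem_doubleFloors hinner₁))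
  obtain ⟨s₁, hs₁⟩ := hend.exists_base_succAbove (r := 3) (Finset.inr_mem_disjSum.2 hinner₁)
  obtain ⟨s₂, hs₂⟩ := hend.exists_base_succAbove (r := 3) (Finset.inr_mem_disjSum.2 hinner₂)
  have hstar := X.fd.isStarNumbering_pair hdouble hne he
  wlog hlt : s₁ < s₂ generalizing e₁ e₂ s₁ s₂
  · have hs : s₁ ≠ s₂ := fun h => hne (Sum.inr_injective (hs₁.symm.trans (h ▸ hs₂)))
    rw [show X.G.src e₁ = X.G.src e₂ from (hstar.src_eq 1).symm] at hs₀
    have he' := he.trans (Finset.pair_comm e₁ e₂)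
    exact this e₂ e₁ hne.symm he' hinner₂ hinner₁ hs₀ s₂ hs₂ s₁ hs₁
      (X.fd.isStarNumbering_pair hdouble hne.symm he') (lt_of_le_of_ne (not_lt.1 hlt) hs.symm)
  have hlt₁ : s₀ < s₁ := lt_of_veStep_of_base_succAbove (r := 3) hs₀ hs₁ rfl
  obtain ⟨rfl, rfl, rfl⟩ : s₀ = 0 ∧ s₁ = 1 ∧ s₂ = 2 := by omega
  exact twoStar.exists_presentation hend hstar
    (Fin.forall_fin_succ.2 ⟨hs₀, Fin.forall_fin_two.2 ⟨hs₁, hs₂⟩⟩)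

end UnitMarkedFD

section AttachSum

variable {R : Type*} [CommSemiring R] {n : ℕ}

/-- The sum over all ways `f` of attaching `N` leaves to the floors `0, …, n`, where a floor
`k.succ` of divergence `d k` carrying `m` leaves contributes `φ (d k - m)`. -/
def attachSum (φ : ℕ → R) (N : ℕ) (d : Fin n → ℕ) : R :=
  ∑ f : Fin N → Fin (n + 1), ∏ k, φ (d k - (Finset.univ.filter fun i => f i = k.succ).card)

variable (φ : ℕ → R)

lemma attachSum_zero (d : Fin n → ℕ) : attachSum φ 0 d = ∏ k, φ (d k) := by
  simp [attachSum]

lemma sum_mul_prod_attach (A : Fin (n + 1) → R) (N : ℕ) (d : Fin n → ℕ) :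
    ∑ f : Fin (N + 1) → Fin (n + 1),
        A (f 0) * ∏ k, φ (d k - (Finset.univ.filter fun i => f i = k.succ).card) =
      A 0 * attachSum φ N d +
        ∑ k, A k.succ * attachSum φ N (Function.update d k (d k - 1)) := by
  have hcons (c : Fin (n + 1)) (f : Fin N → Fin (n + 1)) (k : Fin n) :
      (Finset.univ.filter fun i => Fin.consEquiv (fun _ => Fin (n + 1)) (c, f) i = k.succ).card =
        (if c = k.succ then 1 else 0) + (Finset.univ.filter fun i => f i = k.succ).card :=
    Fin.card_filter_univ_succ' _
  have hupdate (l k : Fin n) :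
      d k - (if l = k then 1 else 0) = Function.update d l (d l - 1) k := by
    by_cases hl : l = k
    · subst hl; simp
    · simp [hl, Ne.symm hl]
  have hzero (c : Fin (n + 1)) (f : Fin N → Fin (n + 1)) :
      Fin.consEquiv (fun _ => Fin (n + 1)) (c, f) 0 = c := rfl
  rw [← (Fin.consEquiv fun _ => Fin (n + 1)).sum_comp, Fintype.sum_prod_type, Fin.sum_univ_succ]
  simp only [hzero, hcons, ← Nat.sub_sub, Fin.succ_inj, hupdate, ← Finset.mul_sum, attachSum,
    (Fin.succ_ne_zero _).symm, if_false, Nat.sub_zero]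

lemma attachSum_succ (N : ℕ) (d : Fin n → ℕ) :
    attachSum φ (N + 1) d =
      attachSum φ N d + ∑ k, attachSum φ N (Function.update d k (d k - 1)) := by
  simpa [attachSum] using sum_mul_prod_attach φ (fun _ => 1) N d

variable {φ}

lemma attachSum_eq_zero (hφ : φ 0 = 0) {N : ℕ} {d : Fin n → ℕ} {k : Fin n} (hk : d k = 0) :
    attachSum φ N d = 0 :=
  Finset.sum_eq_zero fun f _ => Finset.prod_eq_zero (Finset.mem_univ k) (by simp [hk, hφ])

lemma attachSum_single (hφ : φ 0 = 0) (N m : ℕ) :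
    attachSum φ N ![m] = ∑ i ∈ Finset.range m, N.choose i * φ (m - i) := by
  induction N generalizing m with
  | zero => cases m <;> simp [attachSum_zero, hφ, Finset.sum_range_succ']
  | succ N ih =>
    cases m with
    | zero => exact attachSum_eq_zero hφ (k := 0) rfl
    | succ m =>
      have hupdate : Function.update ![m + 1] 0 m = ![m] := by ext i; simp [Subsingleton.elim i 0]
      rw [attachSum_succ]
      simp [hupdate, ih, Finset.sum_range_succ', Nat.choose_succ_succ, add_mul,
        Finset.sum_add_distrib]
      ring

lemma attachSum_pair_succ (N x y : ℕ) :
    attachSum φ (N + 1) ![x, y] =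
      attachSum φ N ![x, y] + attachSum φ N ![x - 1, y] + attachSum φ N ![x, y - 1] := by
  have hfst : Function.update ![x, y] 0 (x - 1) = ![x - 1, y] := by ext i; fin_cases i <;> rfl
  have hsnd : Function.update ![x, y] 1 (y - 1) = ![x, y - 1] := by ext i; fin_cases i <;> rfl
  rw [attachSum_succ, Fin.sum_univ_two]
  simp only [Matrix.cons_val_zero, Matrix.cons_val_one, hfst, hsnd, add_assoc]

lemma attachSum_one_one (hφ : φ 0 = 0) (N : ℕ) : attachSum φ N ![1, 1] = φ 1 ^ 2 := by
  induction N with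
  | zero => simp [attachSum_zero, sq]
  | succ N ih =>
    rw [attachSum_pair_succ, ih, attachSum_eq_zero hφ (d := ![1 - 1, 1]) (k := 0) rfl,
      attachSum_eq_zero hφ (d := ![1, 1 - 1]) (k := 1) rfl, add_zero, add_zero]

lemma attachSum_one_two (hφ : φ 0 = 0) (N : ℕ) :
    attachSum φ N ![1, 2] = φ 1 * φ 2 + N * φ 1 ^ 2 := by
  induction N with
  | zero => simp [attachSum_zero]
  | succ N ih =>
    rw [attachSum_pair_succ, ih, attachSum_eq_zero hφ (d := ![1 - 1, 2]) (k := 0) rfl,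
      attachSum_one_one hφ]
    push_cast
    ring

lemma attachSum_two_one (hφ : φ 0 = 0) (N : ℕ) :
    attachSum φ N ![2, 1] = φ 1 * φ 2 + N * φ 1 ^ 2 := by
  induction N with
  | zero => simp [attachSum_zero, mul_comm]
  | succ N ih =>
    rw [attachSum_pair_succ, ih, attachSum_eq_zero hφ (d := ![2, 1 - 1]) (k := 1) rfl,
      attachSum_one_one hφ]
    push_cast
    ring

lemma attachSum_two_two (hφ : φ 0 = 0) (N : ℕ) :
    attachSum φ N ![2, 2] =
      φ 2 ^ 2 + 2 * N * φ 1 * φ 2 + 2 * N.choose 2 * φ 1 ^ 2 := by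
  induction N with
  | zero => simp [attachSum_zero, sq]
  | succ N ih =>
    rw [attachSum_pair_succ, ih, attachSum_one_two hφ, attachSum_two_one hφ,
      Nat.choose_succ_succ' N 1, Nat.choose_one_right]
    push_cast
    ring

end AttachSum

namespace StarDiagram

variable {k r n d : ℕ} {T : StarTemplate k r n d}

lemma injective_f_j : Function.Injective fun D : StarDiagram T => (D.f, D.j) :=
  fun _ _ h => StarDiagram.ext (congrArg Prod.fst h) (congrArg Prod.snd h)

noncomputable instance : Fintype (StarDiagram T) :=
  Fintype.ofInjective _ injective_f_j

lemma sum_prod_u {R : Type*} [CommSemiring R] {φ : ℕ → R} (hφ : φ 0 = 0) :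
    ∑ D : StarDiagram T, ∏ l, φ (D.u l) =
      attachSum φ (k + 1) (fun _ : Fin (n + 1) => d) + (min (r + 1) (T.top + 1) : ℕ) *
        ∑ l, attachSum φ (k + 1) (Function.update (fun _ : Fin (n + 1) => d) l (d - 1)) := by
  set A : Fin (n + 2) → ℕ := fun c => min (r + 1) (starPos T.top (Sum.inl c) + 1)
  have hA (c : Fin (n + 2)) :
      (Finset.univ.filter fun j : Fin (r + 1) => (j : ℕ) ≤ starPos T.top (Sum.inl c)).card =
        A c := by
    simpa only [Nat.lt_succ_iff] using
      Fin.card_filter_val_lt (n := r + 1) (m := starPos T.top (Sum.inl c) + 1)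
  have hcentre : A 0 = 1 := by simp [A, starPos]
  have houter (l : Fin (n + 1)) : A l.succ = min (r + 1) (T.top + 1) := rfl
  set F : (Fin (k + 2) → Fin (n + 2)) → R := fun f =>
    ∏ l : Fin (n + 1), φ (d - (Finset.univ.filter fun i => f i = l.succ).card)
  calc ∑ D : StarDiagram T, ∏ l, φ (D.u l)
    _ = ∑ x : (Fin (k + 2) → Fin (n + 2)) × Fin (r + 1),
          if (x.2 : ℕ) ≤ starPos T.top (Sum.inl (x.1 0)) then F x.1 else 0 := by
      refine Fintype.sum_of_injective _ injective_f_j _ _ (fun x hx => ?_) fun D => ?_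
      · refine ite_eq_right_iff.2 fun hj => ?_
        by_contra hne
        exact hx ⟨⟨x.1, x.2, fun l => not_le.1 fun hle => hne (Finset.prod_eq_zero
          (Finset.mem_univ l) (by rw [Nat.sub_eq_zero_of_le hle, hφ])), hj⟩, rfl⟩
      · exact (if_pos D.j_le).symm
    _ = ∑ f : Fin (k + 2) → Fin (n + 2), (A (f 0) : R) * F f := by
      rw [Fintype.sum_prod_type]
      simp only [← Finset.sum_filter, Finset.sum_const, hA, nsmul_eq_mul]
    _ = _ := by
      rw [sum_mul_prod_attach φ (fun c => (A c : R)), hcentre, Nat.cast_one, one_mul]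
      simp only [houter, Finset.mul_sum]

lemma sum_multq (T : StarTemplate k r n d) : ∑ D : StarDiagram T, D.toMarkedFD.multq =
    attachSum (qInt · ^ 2) (k + 1) (fun _ : Fin (n + 1) => d) +
      (min (r + 1) (T.top + 1) : ℕ) * ∑ l, attachSum (qInt · ^ 2) (k + 1)
        (Function.update (fun _ : Fin (n + 1) => d) l (d - 1)) := by
  rw [← sum_prod_u (φ := (qInt · ^ 2)) (by simp [qInt])]
  exact Finset.sum_congr rfl fun D _ => (Presentation.toMarkedFD D).multq_eq

lemma sum_multq_oneStar : ∑ D : StarDiagram oneStar, D.toMarkedFD.multq =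
    qInt 4 ^ 2 + 10 * qInt 3 ^ 2 + 42 * qInt 2 ^ 2 + 98 := by
  have hzero : qInt 0 ^ 2 = 0 := by simp [qInt]
  have hone : qInt 1 = 1 := by simp [qInt]
  have hfour : (fun _ : Fin 1 => 4) = ![4] := by decide
  have hupdate : Function.update ![4] (0 : Fin 1) 3 = ![3] := by decide
  have hsum : ∑ D : StarDiagram oneStar, D.toMarkedFD.multq = attachSum (qInt · ^ 2) 7 ![4] +
      (3 : ℕ) * ∑ l : Fin 1, attachSum (qInt · ^ 2) 7 (Function.update ![4] l 3) :=
    hfour ▸ sum_multq oneStar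
  rw [hsum, Fin.sum_univ_one, hupdate, attachSum_single hzero, attachSum_single hzero]
  norm_num [Finset.sum_range_succ, Nat.choose, hone]
  ring

lemma sum_multq_twoStar : ∑ D : StarDiagram twoStar, D.toMarkedFD.multq =
    qInt 2 ^ 4 + 22 * qInt 2 ^ 2 + 98 := by
  have hzero : qInt 0 ^ 2 = 0 := by simp [qInt]
  have hone : qInt 1 = 1 := by simp [qInt]
  have htwo : (fun _ : Fin 2 => 2) = ![2, 2] := by decide
  have hfst : Function.update ![2, 2] (0 : Fin 2) 1 = ![1, 2] := by decide
  have hsnd : Function.update ![2, 2] (1 : Fin 2) 1 = ![2, 1] := by decide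
  have hsum : ∑ D : StarDiagram twoStar, D.toMarkedFD.multq = attachSum (qInt · ^ 2) 7 ![2, 2] +
      (4 : ℕ) * ∑ l : Fin 2, attachSum (qInt · ^ 2) 7 (Function.update ![2, 2] l 1) :=
    htwo ▸ sum_multq twoStar
  rw [hsum, Fin.sum_univ_two, hfst, hsnd, attachSum_two_two hzero, attachSum_one_two hzero,
    attachSum_two_one hzero]
  norm_num [Nat.choose, hone]
  ring

end StarDiagram

/-- A representative of each equivalence class of marked floor diagrams. -/
noncomputable def starRepresentative :
    StarDiagram oneStar ⊕ StarDiagram twoStar → UnitMarkedFD 6 0 4 :=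
  Sum.elim StarDiagram.toMarkedFD StarDiagram.toMarkedFD

namespace UnitMarkedFD

lemma exists_equivalent_starRepresentative (X : UnitMarkedFD 6 0 4) :
    ∃ i, X.Equivalent (starRepresentative i) := by
  obtain ⟨hcard, hdouble⟩ | ⟨hcard, hdouble⟩ := X.fd.card_innerEdges_eq_one_or_two
  · obtain ⟨D, hD⟩ := X.exists_oneStar_presentation hcard hdouble
    exact ⟨Sum.inl D, StarDiagram.equivalent_toMarkedFD_iff.2 hD⟩
  · obtain ⟨D, hD⟩ := X.exists_twoStar_presentation hcard hdouble
    exact ⟨Sum.inr D, StarDiagram.equivalent_toMarkedFD_iff.2 hD⟩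

lemma eq_of_equivalent_starRepresentative {X : UnitMarkedFD 6 0 4}
    {i i' : StarDiagram oneStar ⊕ StarDiagram twoStar} (h : X.Equivalent (starRepresentative i))
    (h' : X.Equivalent (starRepresentative i')) : i = i' := by
  have hvert (D : StarDiagram oneStar) (D' : StarDiagram twoStar)
      (hD : X.Equivalent D.toMarkedFD) (hD' : X.Equivalent D'.toMarkedFD) : False := by
    obtain ⟨P⟩ := StarDiagram.equivalent_toMarkedFD_iff.1 hD
    obtain ⟨P'⟩ := StarDiagram.equivalent_toMarkedFD_iff.1 hD'
    have hcard := StarPresentation.card_vert P.toPresentation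
    have hcard' := StarPresentation.card_vert P'.toPresentation
    omega
  rcases i with D | D <;> rcases i' with D' | D'
  · obtain ⟨P⟩ := StarDiagram.equivalent_toMarkedFD_iff.1 h
    obtain ⟨P'⟩ := StarDiagram.equivalent_toMarkedFD_iff.1 h'
    exact congrArg Sum.inl (P.starDiagram_eq P')
  · exact (hvert D D' h h').elim
  · exact (hvert D' D h' h).elim
  · obtain ⟨P⟩ := StarDiagram.equivalent_toMarkedFD_iff.1 h
    obtain ⟨P'⟩ := StarDiagram.equivalent_toMarkedFD_iff.1 h'
    exact congrArg Sum.inr (P.starDiagram_eq P')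

end UnitMarkedFD

/-- In `X₆'` (`k = 6`), for the class `d = 4[L] − Σ_{i=1}^6 [E_i]`
(so `a = 4`, `bᵢ = 1` for all `i`, and `d·[E] = 2`), the refined count of `d`-marked
floor diagrams of genus `0` and type `((1),(1))` is
`N_q^{(1),(1)} = [2]_q⁴ + [4]_q² + 10[3]_q² + 64[2]_q² + 196`. -/
theorem refined_count_4L_type_1_1 :
    IsRefinedCount 6 0 4 (fun _ => 1) [1] [1]
      (qInt 2 ^ 4 + qInt 4 ^ 2 + 10 * qInt 3 ^ 2 + 64 * qInt 2 ^ 2 + 196) := by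
  refine ⟨_, inferInstance, starRepresentative, fun X : UnitMarkedFD 6 0 4 => ?_, ?_⟩
  · obtain ⟨i, hi⟩ := X.exists_equivalent_starRepresentative
    exact ⟨i, hi, fun i' hi' => UnitMarkedFD.eq_of_equivalent_starRepresentative hi' hi⟩
  · calc qInt 2 ^ 4 + qInt 4 ^ 2 + 10 * qInt 3 ^ 2 + 64 * qInt 2 ^ 2 + 196
      _ = (qInt 4 ^ 2 + 10 * qInt 3 ^ 2 + 42 * qInt 2 ^ 2 + 98) +
          (qInt 2 ^ 4 + 22 * qInt 2 ^ 2 + 98) := by ring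
      _ = ∑ D : StarDiagram oneStar, D.toMarkedFD.multq +
          ∑ D : StarDiagram twoStar, D.toMarkedFD.multq := by
        rw [StarDiagram.sum_multq_oneStar, StarDiagram.sum_multq_twoStar]
      _ = ∑ i, (starRepresentative i).multq := by
        rw [Fintype.sum_sum_type]; rfl
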